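/- arXiv:0711.3049 — 5 statements merged into one kernel-verified Lean document; each statement's English description precedes it below -/
import Mathlib

section
/- If G is a graph on n vertices with ℓ connected components, then for every pair of nonnegative integers (r,s) with n − ℓ ≤ r + s ≤ n there exists a real symmetric matrix A ∈ S(G) with partial inertia (r,s). -/
open Matrix

/-- Number of positive eigenvalues (with multiplicity) of a real symmetric matrix. -/
noncomputable def posIn {m : ℕ} {A : Matrix (Fin m) (Fin m) ℝ} (hA : A.IsHermitian) : ℕ :=
  Finset.card (Finset.univ.filter fun i => 0 < hA.eigenvalues i)

/-- Number of negative eigenvalues (with multiplicity) of a real symmetric matrix. -/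
noncomputable def negIn {m : ℕ} {A : Matrix (Fin m) (Fin m) ℝ} (hA : A.IsHermitian) : ℕ :=
  Finset.card (Finset.univ.filter fun i => hA.eigenvalues i < 0)

/-- `A` has partial inertia `(r, s)`. -/
def HasInertia {m : ℕ} (A : Matrix (Fin m) (Fin m) ℝ) (r s : ℕ) : Prop :=
  ∃ hA : A.IsHermitian, posIn hA = r ∧ negIn hA = s

/-- `A` is a real symmetric matrix whose off-diagonal zero–nonzero pattern is
given by the edges of the graph `G`. -/
def SMat {m : ℕ} (G : SimpleGraph (Fin m)) (A : Matrix (Fin m) (Fin m) ℝ) : Prop :=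
  A.IsSymm ∧ ∀ i j : Fin m, i ≠ j → (A i j ≠ 0 ↔ G.Adj i j)

open Finset Module QuadraticForm QuadraticMap

/-!
For `w : V ⊕ G.edgeSet → ℝ` consider the quadratic form
`∑ v, w v * x v ^ 2 + ∑ e, w e * (x e₁ - x e₂) ^ 2`. Its matrix lies in `S(G)` as soon as `w`
does not vanish on the edges. The edge differences vanish together exactly on the functions that
are constant on components, so they span a space of functionals of dimension `n - ℓ`. Choose a
basis `F` of this space among them and complete it by coordinates and differences to a basis `B`
of the dual of `V → ℝ`. Putting weights `±1` on a set between `F` and `B` realizes every inertia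
`(r, s)` with `n - ℓ ≤ r + s ≤ n`, but leaves edges outside `F` with weight zero. Adding a small
`ε > 0` to all edge weights repairs this and does not change the inertia: by Cauchy–Schwarz the
squares of all edge differences are controlled by those in `F`, where the weights are `±1`, so the
perturbed form lies between two forms that are diagonal in `B` with the same signs.
-/

section Signature

variable {𝕜 M : Type*} [Field 𝕜] [LinearOrder 𝕜] [AddCommGroup M] [Module 𝕜 M]

theorem sigPos_mono [FiniteDimensional 𝕜 M] {Q Q' : QuadraticForm 𝕜 M}
    (h : ∀ x, Q x ≤ Q' x) : sigPos Q ≤ sigPos Q' := by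
  obtain ⟨W, hW, hpos⟩ := exists_finrank_eq_sigPos_and_posDef Q
  rw [← hW]
  exact le_sigPos_of_posDef Q' fun x hx => (hpos x hx).trans_le (h x)

variable [IsStrictOrderedRing 𝕜] {ι : Type*} [Fintype ι]

theorem sigPos_weightedSumSquares_comp (w : ι → 𝕜) (e : M ≃ₗ[𝕜] (ι → 𝕜)) :
    sigPos ((weightedSumSquares 𝕜 w).comp e.toLinearMap) = {i | 0 < w i}.ncard :=
  sigPos_of_equiv_weightedSumSquares ⟨⟨e, fun _ => rfl⟩⟩

theorem sigNeg_weightedSumSquares_comp (w : ι → 𝕜) (e : M ≃ₗ[𝕜] (ι → 𝕜)) :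
    sigNeg ((weightedSumSquares 𝕜 w).comp e.toLinearMap) = {i | w i < 0}.ncard :=
  sigNeg_of_equiv_weightedSumSquares ⟨⟨e, fun _ => rfl⟩⟩

theorem sigPos_eq_of_abs_sub_le {Q : QuadraticForm 𝕜 M} {w : ι → 𝕜} {c : 𝕜} (hc : c < 1)
    (e : M ≃ₗ[𝕜] (ι → 𝕜))
    (h : ∀ x, |Q x - weightedSumSquares 𝕜 w (e x)| ≤
      c * weightedSumSquares 𝕜 (fun i => |w i|) (e x)) :
    sigPos Q = {i | 0 < w i}.ncard := by
  have : FiniteDimensional 𝕜 M := e.symm.finiteDimensional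
  have add_eq (a : 𝕜) (x : M) : weightedSumSquares 𝕜 (fun i => w i + a * |w i|) (e x) =
      weightedSumSquares 𝕜 w (e x) + a * weightedSumSquares 𝕜 (fun i => |w i|) (e x) := by
    simp only [weightedSumSquares_apply, smul_eq_mul, add_mul, mul_assoc, sum_add_distrib, mul_sum]
  refine le_antisymm ?_ ?_
  · calc
      sigPos Q ≤ sigPos ((weightedSumSquares 𝕜 fun i => w i + c * |w i|).comp e.toLinearMap) :=
        sigPos_mono fun x => by
          have := (abs_le.1 (h x)).2
          simp only [QuadraticMap.comp_apply, LinearEquiv.coe_coe, add_eq]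
          linarith
      _ = {i | 0 < w i + c * |w i|}.ncard := sigPos_weightedSumSquares_comp _ e
      _ ≤ {i | 0 < w i}.ncard := by
        refine Set.ncard_le_ncard fun i (hi : 0 < w i + c * |w i|) => ?_
        by_contra hw
        rw [abs_of_nonpos (not_lt.1 hw)] at hi
        have := mul_nonpos_of_nonpos_of_nonneg (not_lt.1 hw) (sub_nonneg.2 hc.le)
        linarith
  · calc
      {i | 0 < w i}.ncard ≤ {i | 0 < w i + -c * |w i|}.ncard := by
        refine Set.ncard_le_ncard fun i (hi : 0 < w i) => ?_
        have := mul_pos hi (sub_pos.2 hc)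
        rw [Set.mem_ofPred_eq, abs_of_pos hi]
        linarith
      _ = sigPos ((weightedSumSquares 𝕜 fun i => w i + -c * |w i|).comp e.toLinearMap) :=
        (sigPos_weightedSumSquares_comp _ e).symm
      _ ≤ sigPos Q :=
        sigPos_mono fun x => by
          have := (abs_le.1 (h x)).1
          simp only [QuadraticMap.comp_apply, LinearEquiv.coe_coe, add_eq]
          linarith

theorem sigNeg_eq_of_abs_sub_le {Q : QuadraticForm 𝕜 M} {w : ι → 𝕜} {c : 𝕜} (hc : c < 1)
    (e : M ≃ₗ[𝕜] (ι → 𝕜))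
    (h : ∀ x, |Q x - weightedSumSquares 𝕜 w (e x)| ≤
      c * weightedSumSquares 𝕜 (fun i => |w i|) (e x)) :
    sigNeg Q = {i | w i < 0}.ncard := by
  rw [← sigPos_neg, sigPos_eq_of_abs_sub_le (w := fun i => -w i) hc e fun x => ?_]
  · simp only [neg_pos]
  · have hneg : weightedSumSquares 𝕜 (fun i => -w i) (e x) = -weightedSumSquares 𝕜 w (e x) := by
      simp only [weightedSumSquares_apply, neg_smul, sum_neg_distrib]
    simpa only [_root_.neg_apply, hneg, neg_sub_neg, abs_neg, abs_sub_comm] using h x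

end Signature

section Functionals

variable {𝕜 M ι : Type*} [Field 𝕜] [AddCommGroup M] [Module 𝕜 M]

theorem exists_finset_subset_card_eq_finrank [Finite ι] (φ : ι → M)
    (hφ : Submodule.span 𝕜 (Set.range φ) = ⊤) (E : Set ι) :
    ∃ F B : Finset ι, F ⊆ B ∧ φ '' E ⊆ Submodule.span 𝕜 (φ '' F) ∧
      #F = finrank 𝕜 (Submodule.span 𝕜 (φ '' E)) ∧
      Submodule.span 𝕜 (φ '' B) = ⊤ ∧ #B = finrank 𝕜 M := by
  obtain ⟨F, hFE, -, hEF, hF⟩ :=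
    exists_linearIndepOn_extension (linearIndepOn_empty 𝕜 φ) (Set.empty_subset E)
  obtain ⟨B, -, hFB, hB, hBli⟩ := exists_linearIndepOn_extension hF (Set.subset_univ F)
  have hspanF : Submodule.span 𝕜 (φ '' F) = Submodule.span 𝕜 (φ '' E) :=
    (Submodule.span_mono (Set.image_mono hFE)).antisymm (Submodule.span_le.2 hEF)
  have hspanB : Submodule.span 𝕜 (φ '' B) = ⊤ := by
    rw [eq_top_iff, ← hφ, Submodule.span_le, ← Set.image_univ]
    exact hB
  have card_eq {s : Finset ι} (hs : LinearIndepOn 𝕜 φ (s : Set ι)) :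
      #s = finrank 𝕜 (Submodule.span 𝕜 (φ '' s)) := by
    rw [Set.image_eq_range, finrank_span_eq_card hs]
    exact (Fintype.card_coe s).symm
  lift F to Finset ι using F.toFinite
  lift B to Finset ι using B.toFinite
  refine ⟨F, B, coe_subset.1 hFB, hEF, ?_, hspanB, ?_⟩
  · rw [card_eq hF, hspanF]
  · rw [card_eq hBli, hspanB, finrank_top]

theorem exists_linearEquiv_pi_of_span_eq_top (φ : ι → Dual 𝕜 M)
    (B : Finset ι) (hB : Submodule.span 𝕜 (φ '' B) = ⊤) (hcard : #B = finrank 𝕜 M) :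
    ∃ e : M ≃ₗ[𝕜] (B → 𝕜), ∀ x b, e x b = φ b x := by
  let L : M →ₗ[𝕜] (B → 𝕜) := LinearMap.pi fun b => φ b
  have hL : Function.Injective L := by
    refine (injective_iff_map_eq_zero L).2 fun x hx => ?_
    have : Submodule.span 𝕜 (φ '' B) ≤ LinearMap.ker (Dual.eval 𝕜 M x) := by
      rw [Submodule.span_le]
      rintro _ ⟨b, hb, rfl⟩
      exact congrFun hx ⟨b, hb⟩
    rw [hB, top_le_iff] at this
    exact (forall_dual_apply_eq_zero_iff 𝕜 x).1 (LinearMap.congr_fun (LinearMap.ker_eq_top.1 this))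
  have : FiniteDimensional 𝕜 M := Module.Finite.of_injective L hL
  refine ⟨L.linearEquivOfInjective hL ?_, fun _ _ => rfl⟩
  rw [finrank_fintype_fun_eq_card, Fintype.card_coe, hcard]

theorem finrank_span_range_proj_comp_add_finrank_ker [FiniteDimensional 𝕜 M] (f : M →ₗ[𝕜] ι → 𝕜) :
    finrank 𝕜 (Submodule.span 𝕜 (Set.range fun i => LinearMap.proj i ∘ₗ f)) +
      finrank 𝕜 (LinearMap.ker f) = finrank 𝕜 M := by
  have hker : (Submodule.span 𝕜 (Set.range fun i =>
      LinearMap.proj i ∘ₗ f)).dualCoannihilator = LinearMap.ker f := by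
    ext x
    rw [← SetLike.mem_coe, Submodule.coe_dualCoannihilator_span, LinearMap.mem_ker, funext_iff]
    exact Set.forall_mem_range
  rw [← hker, Subspace.finrank_add_finrank_dualCoannihilator_eq]

variable [LinearOrder 𝕜] [IsStrictOrderedRing 𝕜]

theorem exists_sum_sq_le_mul_sum_sq (φ : ι → Dual 𝕜 M) (E F : Finset ι)
    (h : φ '' E ⊆ Submodule.span 𝕜 (φ '' F)) :
    ∃ C : 𝕜, 0 ≤ C ∧ ∀ x, ∑ i ∈ E, φ i x ^ 2 ≤ C * ∑ j ∈ F, φ j x ^ 2 := by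
  have hcomb (i) (hi : i ∈ E) : ∃ a : ι → 𝕜, ∑ j ∈ F, a j • φ j = φ i :=
    (Submodule.mem_span_image_finset_iff_exists_fun' 𝕜).1 (h (Set.mem_image_of_mem φ hi))
  choose! a ha using hcomb
  refine ⟨∑ i ∈ E, ∑ j ∈ F, a i j ^ 2, by positivity, fun x => ?_⟩
  rw [sum_mul]
  refine sum_le_sum fun i hi => ?_
  calc φ i x ^ 2 = (∑ j ∈ F, a i j * φ j x) ^ 2 := by
        simp only [← ha i hi, LinearMap.sum_apply, LinearMap.smul_apply, smul_eq_mul]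
    _ ≤ (∑ j ∈ F, a i j ^ 2) * ∑ j ∈ F, φ j x ^ 2 := sum_mul_sq_le_sq_mul_sq _ _ _

end Functionals

theorem exists_signType_card_eq {ι : Type*} {F B : Finset ι} (hFB : F ⊆ B) {r s : ℕ}
    (hF : #F ≤ r + s) (hB : r + s ≤ #B) :
    ∃ σ : ι → SignType, (∀ i ∈ F, σ i ≠ 0) ∧ (∀ i ∉ B, σ i = 0) ∧
      #{i ∈ B | σ i = 1} = r ∧ #{i ∈ B | σ i = -1} = s := by
  classical
  obtain ⟨T, hFT, hTB, hT⟩ := exists_subsuperset_card_eq hFB hF hB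
  obtain ⟨X, hXT, hX⟩ := exists_subset_card_eq (s := T) (n := r) (by lia)
  refine ⟨fun i => if i ∈ X then 1 else if i ∈ T then -1 else 0, ?_, ?_, ?_, ?_⟩
  · have hone : (1 : SignType) ≠ 0 := by decide
    have hneg : (-1 : SignType) ≠ 0 := by decide
    grind
  · grind
  · have hneg : (-1 : SignType) ≠ 1 := by decide
    have hzero : (0 : SignType) ≠ 1 := by decide
    rw [← hX]
    congr 1
    grind
  · have hone : (1 : SignType) ≠ -1 := by decide
    have hzero : (0 : SignType) ≠ -1 := by decide
    have hTX : #(T \ X) = s := by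
      rw [card_sdiff_of_subset hXT]
      lia
    rw [← hTX]
    congr 1
    grind

section Perturbation

variable {𝕜 : Type*} [Field 𝕜] [LinearOrder 𝕜] [IsStrictOrderedRing 𝕜]

theorem signType_cast_pos_iff {σ : SignType} : (0 : 𝕜) < σ ↔ σ = 1 := by
  cases σ <;> simp

theorem signType_cast_neg_iff {σ : SignType} : (σ : 𝕜) < 0 ↔ σ = -1 := by
  cases σ <;> simp

theorem signType_cast_add_ne_zero (σ : SignType) {ε : 𝕜} (h0 : 0 < ε) (h1 : ε < 1) :
    (σ : 𝕜) + ε ≠ 0 := by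
  cases σ
  · simpa using h0.ne'
  · simpa [neg_add_eq_zero] using h1.ne'
  · simpa using (by positivity : 1 + ε ≠ 0)

theorem ncard_setOf_coe_eq_card_filter {ι : Type*} (B : Finset ι) (p : ι → Prop)
    [DecidablePred p] : {b : B | p b}.ncard = #{i ∈ B | p i} := by
  rw [← Set.ncard_image_of_injective _ Subtype.val_injective, ← Set.ncard_coe_finset]
  congr 1
  ext i
  simp [and_comm]

variable {M ι : Type*} [AddCommGroup M] [Module 𝕜 M] [Fintype ι]

theorem abs_weightedSumSquares_add_indicator_sub_le [DecidableEq ι] {φ : ι → Dual 𝕜 M}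
    {E F B : Finset ι} (hFB : F ⊆ B) {σ : ι → SignType} (hF : ∀ i ∈ F, σ i ≠ 0)
    (hB : ∀ i ∉ B, σ i = 0) {C ε : 𝕜} (hC : 0 ≤ C) (hε : 0 ≤ ε) (x : M)
    (h : ∑ i ∈ E, φ i x ^ 2 ≤ C * ∑ j ∈ F, φ j x ^ 2) :
    |weightedSumSquares 𝕜 (fun i => (σ i : 𝕜) + if i ∈ E then ε else 0) (fun i => φ i x) -
        weightedSumSquares 𝕜 (fun b : B => (σ b : 𝕜)) (fun b : B => φ b x)| ≤
      ε * C * weightedSumSquares 𝕜 (fun b : B => |(σ b : 𝕜)|) (fun b : B => φ b x) := by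
  have hbase : weightedSumSquares 𝕜 (fun b : B => (σ b : 𝕜)) (fun b : B => φ b x) =
      ∑ i, (σ i : 𝕜) * φ i x ^ 2 := by
    simp only [weightedSumSquares_apply, smul_eq_mul, ← pow_two]
    rw [sum_coe_sort B fun i => (σ i : 𝕜) * φ i x ^ 2]
    exact sum_subset (subset_univ B) fun i _ hi => by rw [hB i hi, SignType.coe_zero, zero_mul]
  have hpert : weightedSumSquares 𝕜 (fun i => (σ i : 𝕜) + if i ∈ E then ε else 0)
      (fun i => φ i x) = ∑ i, (σ i : 𝕜) * φ i x ^ 2 + ε * ∑ i ∈ E, φ i x ^ 2 := by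
    simp only [weightedSumSquares_apply, smul_eq_mul, ← pow_two, add_mul, sum_add_distrib, ite_mul,
      zero_mul, sum_ite_mem, univ_inter, mul_sum]
  have hsupp : ∑ j ∈ F, φ j x ^ 2 ≤
      weightedSumSquares 𝕜 (fun b : B => |(σ b : 𝕜)|) (fun b : B => φ b x) := by
    simp only [weightedSumSquares_apply, smul_eq_mul, ← pow_two]
    rw [sum_coe_sort B fun i => |(σ i : 𝕜)| * φ i x ^ 2]
    calc ∑ j ∈ F, φ j x ^ 2 = ∑ j ∈ F, |(σ j : 𝕜)| * φ j x ^ 2 :=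
          sum_congr rfl fun j hj => by
            have := hF j hj
            cases hj : σ j <;> simp_all
      _ ≤ ∑ j ∈ B, |(σ j : 𝕜)| * φ j x ^ 2 :=
          sum_le_sum_of_subset_of_nonneg hFB fun _ _ _ => by positivity
  rw [hbase, hpert, add_sub_cancel_left, abs_of_nonneg (by positivity), mul_assoc]
  gcongr
  exact h.trans (by gcongr)

theorem exists_weights_sigPos_eq_sigNeg_eq {φ : ι → Dual 𝕜 M}
    (hφ : Submodule.span 𝕜 (Set.range φ) = ⊤) (E : Set ι) {r s : ℕ}
    (hE : finrank 𝕜 (Submodule.span 𝕜 (φ '' E)) ≤ r + s) (hM : r + s ≤ finrank 𝕜 M) :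
    ∃ w : ι → 𝕜, (∀ i ∈ E, w i ≠ 0) ∧
      sigPos ((weightedSumSquares 𝕜 w).comp (LinearMap.pi φ)) = r ∧
      sigNeg ((weightedSumSquares 𝕜 w).comp (LinearMap.pi φ)) = s := by
  classical
  lift E to Finset ι using E.toFinite
  obtain ⟨F, B, hFB, hEF, hF, hB, hcard⟩ := exists_finset_subset_card_eq_finrank φ hφ E
  rw [Subspace.dual_finrank_eq] at hcard
  obtain ⟨e, he⟩ := exists_linearEquiv_pi_of_span_eq_top φ B hB hcard
  obtain ⟨C, hC, hsum⟩ := exists_sum_sq_le_mul_sum_sq φ E F hEF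
  obtain ⟨σ, hσF, hσB, hr, hs⟩ :=
    exists_signType_card_eq hFB (hF.trans_le hE) (hM.trans_eq hcard.symm)
  obtain ⟨ε, hε0, hε1, hεC⟩ : ∃ ε : 𝕜, 0 < ε ∧ ε < 1 ∧ ε * C < 1 := by
    have hC2 : 0 < C + 2 := by positivity
    refine ⟨1 / (C + 2), by positivity, ?_, ?_⟩
    · rw [div_lt_one hC2]
      linarith
    · rw [one_div_mul_eq_div, div_lt_one hC2]
      linarith
  let w (i : ι) : 𝕜 := σ i + if i ∈ E then ε else 0
  have hbound (x : M) : |(weightedSumSquares 𝕜 w).comp (LinearMap.pi φ) x -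
      weightedSumSquares 𝕜 (fun b : B => (σ b : 𝕜)) (e x)| ≤
        ε * C * weightedSumSquares 𝕜 (fun b : B => |(σ b : 𝕜)|) (e x) := by
    rw [funext (he x)]
    exact abs_weightedSumSquares_add_indicator_sub_le hFB hσF hσB hC hε0.le x (hsum x)
  refine ⟨w, fun i hi => ?_, ?_, ?_⟩
  · simpa only [w, if_pos (mem_coe.1 hi)] using signType_cast_add_ne_zero (σ i) hε0 hε1
  · simp only [sigPos_eq_of_abs_sub_le hεC e hbound, signType_cast_pos_iff]
    rw [ncard_setOf_coe_eq_card_filter B (σ · = 1), hr]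
  · simp only [sigNeg_eq_of_abs_sub_le hεC e hbound, signType_cast_neg_iff]
    rw [ncard_setOf_coe_eq_card_filter B (σ · = -1), hs]

end Perturbation

section Spectral

variable {m n : Type*} [Fintype m] [DecidableEq m]

theorem transpose_mul_diagonal_mul_apply {R : Type*} [CommRing R] (M : Matrix m n R) (w : m → R)
    (i j : n) : (Mᵀ * diagonal w * M) i j = ∑ k, w k * (M k i * M k j) := by
  rw [mul_apply]
  simp only [mul_diagonal, transpose_apply]
  exact sum_congr rfl fun k _ => by ring

variable [Fintype n] [DecidableEq n]

theorem toQuadraticForm'_transpose_mul_diagonal_mul {R : Type*} [CommRing R]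
    (M : Matrix m n R) (w : m → R) :
    (Mᵀ * diagonal w * M).toQuadraticForm' = (weightedSumSquares R w).comp M.mulVecLin := by
  ext x
  calc (Mᵀ * diagonal w * M).toQuadraticForm' x
    _ = x ⬝ᵥ (Mᵀ * diagonal w * M) *ᵥ x := Matrix.toLinearMap₂'_apply' _ x x
    _ = (M *ᵥ x) ⬝ᵥ diagonal w *ᵥ (M *ᵥ x) := by
      rw [← Matrix.mulVec_mulVec, ← Matrix.mulVec_mulVec, Matrix.dotProduct_mulVec,
        Matrix.vecMul_transpose]
    _ = weightedSumSquares R w (M *ᵥ x) := by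
      simp only [weightedSumSquares_apply, dotProduct, mulVec_diagonal, smul_eq_mul, mul_left_comm]

theorem exists_linearEquiv_toQuadraticForm'_eq {A : Matrix n n ℝ} (hA : A.IsHermitian) :
    ∃ e : (n → ℝ) ≃ₗ[ℝ] (n → ℝ),
      A.toQuadraticForm' = (weightedSumSquares ℝ hA.eigenvalues).comp e.toLinearMap := by
  let U : Matrix n n ℝ := hA.eigenvectorUnitary
  have hUU : U * Uᵀ = 1 := Unitary.coe_mul_star_self hA.eigenvectorUnitary
  have hUU' : Uᵀ * U = 1 := Unitary.coe_star_mul_self hA.eigenvectorUnitary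
  have hspec : A = Uᵀᵀ * diagonal hA.eigenvalues * Uᵀ := hA.spectral_theorem
  refine ⟨LinearEquiv.ofLinearMap Uᵀ.mulVecLin U.mulVecLin
    (by rw [← mulVecLin_mul, hUU', mulVecLin_one])
    (by rw [← mulVecLin_mul, hUU, mulVecLin_one]), ?_⟩
  conv_lhs => rw [hspec, toQuadraticForm'_transpose_mul_diagonal_mul]
  rfl

theorem card_eigenvalues_pos_eq_sigPos {A : Matrix n n ℝ} (hA : A.IsHermitian) :
    #{i | 0 < hA.eigenvalues i} = sigPos A.toQuadraticForm' := by
  obtain ⟨e, he⟩ := exists_linearEquiv_toQuadraticForm'_eq hA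
  rw [he, sigPos_weightedSumSquares_comp, ← Set.ncard_coe_finset, coe_filter_univ]

theorem card_eigenvalues_neg_eq_sigNeg {A : Matrix n n ℝ} (hA : A.IsHermitian) :
    #{i | hA.eigenvalues i < 0} = sigNeg A.toQuadraticForm' := by
  obtain ⟨e, he⟩ := exists_linearEquiv_toQuadraticForm'_eq hA
  rw [he, sigNeg_weightedSumSquares_comp, ← Set.ncard_coe_finset, coe_filter_univ]

end Spectral

section Graph

variable {V : Type*} [DecidableEq V]

/-- The oriented incidence matrix of `G`: the row of an edge is the difference of the indicator
vectors of its two ends, so that multiplying it with `x : V → R` yields the differences of `x` along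
the edges. Each edge is oriented by the pair that `Quot.out` picks; reversing it negates the row. -/
noncomputable def orientedIncMatrix (R : Type*) [Ring R] (G : SimpleGraph V) :
    Matrix G.edgeSet V R :=
  of fun e => Pi.single e.1.out.1 1 - Pi.single e.1.out.2 1

theorem orientedIncMatrix_apply_ne_zero_iff {R : Type*} [Ring R] [Nontrivial R] {G : SimpleGraph V}
    {e : G.edgeSet} {v : V} : orientedIncMatrix R G e v ≠ 0 ↔ v ∈ e.1 := by
  obtain ⟨e, he⟩ := e
  have hout : s(e.out.1, e.out.2) = e := e.out_eq
  have hne : e.out.1 ≠ e.out.2 := G.ne_of_adj (by rwa [← G.mem_edgeSet, hout])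
  have hmem : v ∈ e ↔ v = e.out.1 ∨ v = e.out.2 := by rw [← Sym2.mem_iff, hout]
  rw [hmem]
  simp only [orientedIncMatrix, of_apply, Pi.sub_apply, Pi.single_apply]
  grind [one_ne_zero (α := R), neg_ne_zero (a := (1 : R))]

section Pattern

variable {R : Type*} [CommRing R] {G : SimpleGraph V}

theorem sum_mul_orientedIncMatrix_mul_ne_zero_iff [IsDomain R] [Fintype G.edgeSet]
    {w : G.edgeSet → R} (hw : ∀ e, w e ≠ 0) {i j : V} (hij : i ≠ j) :
    ∑ e, w e * (orientedIncMatrix R G e i * orientedIncMatrix R G e j) ≠ 0 ↔ G.Adj i j := by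
  have hterm (e : G.edgeSet) :
      w e * (orientedIncMatrix R G e i * orientedIncMatrix R G e j) ≠ 0 ↔ e.1 = s(i, j) := by
    rw [mul_ne_zero_iff, mul_ne_zero_iff, and_iff_right (hw e), orientedIncMatrix_apply_ne_zero_iff,
      orientedIncMatrix_apply_ne_zero_iff, Sym2.mem_and_mem_iff hij]
  refine ⟨fun h => ?_, fun h => ?_⟩
  · obtain ⟨e, -, he⟩ := exists_ne_zero_of_sum_ne_zero h
    rw [← G.mem_edgeSet, ← (hterm e).1 he]
    exact e.2
  · rw [sum_eq_single_of_mem ⟨s(i, j), h⟩ (mem_univ _) fun e _ he =>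
      not_ne_iff.1 fun h => he (Subtype.ext ((hterm e).1 h))]
    exact (hterm _).2 rfl

/-- The identity matrix on top of the oriented incidence matrix of `G`: its rows are the coordinates
`x v` and the differences of `x` along the edges, as functionals of `x : V → R`. A weighted sum of
squares of these functionals has a matrix whose off-diagonal entries live on the edges of `G`. -/
noncomputable def vertexEdgeMatrix (R : Type*) [Ring R] (G : SimpleGraph V) :
    Matrix (V ⊕ G.edgeSet) V R :=
  fromRows 1 (orientedIncMatrix R G)

theorem transpose_vertexEdgeMatrix_mul_diagonal_mul_apply_ne_zero_iff [IsDomain R] [Fintype V]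
    [Fintype G.edgeSet] {w : V ⊕ G.edgeSet → R} (hw : ∀ e, w (.inr e) ≠ 0) {i j : V}
    (hij : i ≠ j) :
    ((vertexEdgeMatrix R G)ᵀ * diagonal w * vertexEdgeMatrix R G) i j ≠ 0 ↔ G.Adj i j := by
  have hvertex (v : V) : w (.inl v) * ((1 : Matrix V V R) v i * (1 : Matrix V V R) v j) = 0 := by
    rcases eq_or_ne v i with rfl | hv
    · rw [one_apply_ne hij, mul_zero, mul_zero]
    · rw [one_apply_ne hv, zero_mul, mul_zero]
  rw [transpose_mul_diagonal_mul_apply, Fintype.sum_sum_type,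
    ← sum_mul_orientedIncMatrix_mul_ne_zero_iff hw hij]
  simp only [vertexEdgeMatrix, fromRows_apply_inl, fromRows_apply_inr, hvertex, sum_const_zero,
    zero_add]

end Pattern

variable [Fintype V] (G : SimpleGraph V)

theorem orientedIncMatrix_mulVec {R : Type*} [Ring R] (x : V → R) (e : G.edgeSet) :
    (orientedIncMatrix R G *ᵥ x) e = x e.1.out.1 - x e.1.out.2 := by
  change (Pi.single e.1.out.1 1 - Pi.single e.1.out.2 1) ⬝ᵥ x = _
  rw [sub_dotProduct, single_one_dotProduct, single_one_dotProduct]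

theorem orientedIncMatrix_mulVec_eq_zero_iff_forall_adj {R : Type*} [Ring R] {x : V → R} :
    orientedIncMatrix R G *ᵥ x = 0 ↔ ∀ i j, G.Adj i j → x i = x j := by
  rw [funext_iff]
  simp only [orientedIncMatrix_mulVec, Pi.zero_apply, sub_eq_zero, Subtype.forall]
  refine ⟨fun h i j hij => ?_, fun h e he => h _ _ ?_⟩
  · have hout : s((Quot.out s(i, j)).1, (Quot.out s(i, j)).2) = s(i, j) := Quot.out_eq s(i, j)
    have := h s(i, j) hij
    rcases Sym2.eq_iff.1 hout with ⟨hi, hj⟩ | ⟨hi, hj⟩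
    · rwa [hi, hj] at this
    · rw [hi, hj] at this
      exact this.symm
  · rwa [← G.mem_edgeSet, show s(e.out.1, e.out.2) = e from e.out_eq]

theorem ker_orientedIncMatrix_mulVecLin [DecidableRel G.Adj] :
    LinearMap.ker (orientedIncMatrix ℝ G).mulVecLin = LinearMap.ker (G.lapMatrix ℝ).toLin' := by
  ext x
  rw [LinearMap.mem_ker, LinearMap.mem_ker, mulVecLin_apply, toLin'_apply,
    orientedIncMatrix_mulVec_eq_zero_iff_forall_adj, G.lapMatrix_mulVec_eq_zero_iff_forall_adj]

theorem finrank_span_range_proj_comp_orientedIncMatrix :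
    finrank ℝ (Submodule.span ℝ (Set.range fun e : G.edgeSet =>
      LinearMap.proj e ∘ₗ (orientedIncMatrix ℝ G).mulVecLin)) =
        Fintype.card V - Nat.card G.ConnectedComponent := by
  classical
  have hrank := finrank_span_range_proj_comp_add_finrank_ker (orientedIncMatrix ℝ G).mulVecLin
  rw [ker_orientedIncMatrix_mulVecLin, ← G.card_connectedComponent_eq_finrank_ker_toLin'_lapMatrix,
    finrank_fintype_fun_eq_card, ← Nat.card_eq_fintype_card] at hrank
  exact Nat.eq_sub_of_add_eq hrank

theorem span_range_proj_comp_vertexEdgeMatrix {R : Type*} [CommRing R] :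
    Submodule.span R (Set.range fun k =>
      LinearMap.proj k ∘ₗ (vertexEdgeMatrix R G).mulVecLin) = ⊤ := by
  refine eq_top_iff.2 fun f _ => ?_
  have hcoord (v : V) : LinearMap.proj (.inl v) ∘ₗ (vertexEdgeMatrix R G).mulVecLin =
      (LinearMap.proj v : (V → R) →ₗ[R] R) := by
    ext x
    simp [vertexEdgeMatrix, one_apply, Pi.single_apply]
  have hf : f = ∑ v, f (Pi.single v 1) • (LinearMap.proj v : (V → R) →ₗ[R] R) := by
    ext v
    simp [Pi.single_apply]
  rw [hf]
  exact Submodule.sum_smul_mem _ _ fun v _ => hcoord v ▸ Submodule.subset_span ⟨.inl v, rfl⟩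

theorem stmt5_general {r s : ℕ}
    (h1 : Fintype.card V - Nat.card G.ConnectedComponent ≤ r + s) (h2 : r + s ≤ Fintype.card V) :
    ∃ A : Matrix V V ℝ, (∀ i j, i ≠ j → (A i j ≠ 0 ↔ G.Adj i j)) ∧ ∃ hA : A.IsHermitian,
      #{i | 0 < hA.eigenvalues i} = r ∧ #{i | hA.eigenvalues i < 0} = s := by
  classical
  let M := vertexEdgeMatrix ℝ G
  let φ (k : V ⊕ G.edgeSet) : Dual ℝ (V → ℝ) := LinearMap.proj k ∘ₗ M.mulVecLin
  have hφE : φ '' Set.range Sum.inr = Set.range fun e : G.edgeSet =>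
      LinearMap.proj e ∘ₗ (orientedIncMatrix ℝ G).mulVecLin := (Set.range_comp φ Sum.inr).symm
  obtain ⟨w, hw, hr, hs⟩ := exists_weights_sigPos_eq_sigNeg_eq (φ := φ)
    (span_range_proj_comp_vertexEdgeMatrix G) (Set.range Sum.inr)
    (by rwa [hφE, finrank_span_range_proj_comp_orientedIncMatrix])
    (by rwa [finrank_fintype_fun_eq_card])
  have hpi : LinearMap.pi φ = M.mulVecLin := rfl
  rw [hpi, ← toQuadraticForm'_transpose_mul_diagonal_mul] at hr hs
  have hA : (Mᵀ * diagonal w * M).IsHermitian := by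
    simpa [conjTranspose_eq_transpose_of_trivial] using
      isHermitian_conjTranspose_mul_mul M (isHermitian_diagonal w)
  exact ⟨_, fun i j => transpose_vertexEdgeMatrix_mul_diagonal_mul_apply_ne_zero_iff
    fun e => hw _ ⟨e, rfl⟩, hA, (card_eigenvalues_pos_eq_sigPos hA).trans hr,
    (card_eigenvalues_neg_eq_sigNeg hA).trans hs⟩

end Graph

/-- If G has ℓ components, every partial inertia (r,s) with n−ℓ ≤ r+s ≤ n is
attained in S(G). -/
theorem stmt5 {n : ℕ} (G : SimpleGraph (Fin n)) (ℓ : ℕ)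
    (hl : ℓ = Nat.card G.ConnectedComponent) (r s : ℕ)
    (h1 : n - ℓ ≤ r + s) (h2 : r + s ≤ n) :
    ∃ A : Matrix (Fin n) (Fin n) ℝ, SMat G A ∧ HasInertia A r s := by
  subst hl
  obtain ⟨A, hG, hA, hr, hs⟩ :=
    stmt5_general G (by rwa [Fintype.card_fin]) (by rwa [Fintype.card_fin])
  exact ⟨A, ⟨(conjTranspose_eq_transpose_of_trivial A).symm.trans hA, hG⟩, hA, hr, hs⟩
end

section
/- For any tree T on n vertices, mr(T) + P(T) = n, where mr(T) is the minimum rank of a matrix in S(T) and P(T) is the path cover number of T. -/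
open Matrix

/-- `s` induces a path in `G` (possibly a one-vertex or empty path). -/
def IsPathSet {V : Type*} [Fintype V] [DecidableEq V] (G : SimpleGraph V) (s : Finset V) : Prop :=
  ∃ m : ℕ, Nonempty ((SimpleGraph.induce (↑s : Set V) G) ≃g SimpleGraph.pathGraph m)

/-- The path cover number: the minimum number of vertex-disjoint induced paths
covering all vertices of `G`. -/
noncomputable def pathCoverNumber {V : Type*} [Fintype V] [DecidableEq V]
    (G : SimpleGraph V) : ℕ :=
  sInf {p | ∃ P : Finset (Finset V), P.card = p ∧ (∀ s ∈ P, IsPathSet G s) ∧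
    ∀ v : V, ∃! s, s ∈ P ∧ v ∈ s}

/-- Minimum rank over S(G). -/
noncomputable def mr {n : ℕ} (G : SimpleGraph (Fin n)) : ℕ :=
  sInf {r | ∃ A : Matrix (Fin n) (Fin n) ℝ, SMat G A ∧ A.rank = r}

/-!
A kernel vector of a matrix with the pattern of a forest is zero as soon as it vanishes at the
first vertex of every path of a path cover. Otherwise send each vertex of its support to the
preceding vertex on its path, and each zero coordinate reached in this way to another neighbour in
the support, which the row equation there provides. This is a self-map along edges without
2-cycles, which is impossible because a forest has fewer edges than vertices. So the nullity is at
most the number of paths.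

Conversely, every nonempty forest has an isolated vertex, a leaf whose neighbour has degree at most
two, or two leaves with a common neighbour. Removing such pieces one after another (two leaves
together with their neighbour) and putting them back in reverse builds a path cover together with a
diagonal shift of the adjacency matrix whose nullity is at least the number of paths.
-/

open Module

section Acyclic

variable {V : Type*} {G : SimpleGraph V}

/- A forest has fewer edges than vertices, so two distinct vertices share the edge `s(v, f v)`. -/
theorem exists_apply_apply_eq_of_forall_adj [Finite V] [Nonempty V] (hG : G.IsAcyclic) {f : V → V}
    (hf : ∀ v, G.Adj v (f v)) : ∃ v, f (f v) = v := by
  classical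
  have := Fintype.ofFinite V
  obtain ⟨T, hGT, hT⟩ := SimpleGraph.exists_maximal_isAcyclic_of_le_isAcyclic le_top hG
  have hT : T.IsTree := SimpleGraph.maximal_isAcyclic_iff_isTree.1 (by simpa using hT)
  have hmaps : ∀ v ∈ (Finset.univ : Finset V), s(v, f v) ∈ T.edgeFinset := fun v _ => by
    simpa using hGT (hf v)
  have hlt : T.edgeFinset.card < (Finset.univ : Finset V).card := by
    rw [Finset.card_univ, ← hT.card_edgeFinset]
    exact Nat.lt_succ_self _
  obtain ⟨v, -, w, -, hvw, heq⟩ := Finset.exists_ne_map_eq_of_card_lt_of_maps_to hlt hmaps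
  obtain ⟨rfl, -⟩ | ⟨rfl, h⟩ := Sym2.eq_iff.1 heq
  · exact absurd rfl hvw
  · exact ⟨w, h⟩

theorem exists_isolated_or_pendant [Finite V] [Nonempty V] (hG : G.IsAcyclic) :
    (∃ v, ∀ x, ¬G.Adj v x) ∨
    (∃ v u w, (∀ x, G.Adj v x ↔ x = u) ∧ ∀ x, G.Adj u x → x = v ∨ x = w) ∨
    ∃ v u x, v ≠ x ∧ (∀ y, G.Adj v y ↔ y = u) ∧ ∀ y, G.Adj x y ↔ y = u := by
  obtain ⟨v, w, p, hp, hmax⟩ := SimpleGraph.Walk.exists_isPath_forall_isPath_length_le_length G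
  have hstart : ∀ {a b} (q : G.Walk a b), q.IsPath → q.length = p.length →
      ∀ x, G.Adj a x → x = q.snd := by
    intro a b q hq hlen x hax
    refine hG.eq_snd_of_adj_start hq hax (by_contra fun hx => ?_)
    have := hmax _ _ (q.cons hax.symm) (hq.cons hx)
    simp only [SimpleGraph.Walk.length_cons] at this
    lia
  cases p with
  | nil => exact .inl ⟨v, fun x hx => hx.ne (hstart _ hp rfl x hx).symm⟩
  | @cons _ u _ hvu q =>
    have hleaf : ∀ {a}, G.Adj a u → a ∉ q.support → ∀ y, G.Adj a y ↔ y = u :=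
        fun ha haq y =>
      ⟨by simpa using hstart (q.cons ha) (hp.of_cons.cons haq) rfl y, by rintro rfl; exact ha⟩
    have hv := hleaf hvu ((SimpleGraph.Walk.cons_isPath_iff _ _).1 hp).2
    by_cases hx : ∃ x, G.Adj u x ∧ x ≠ v ∧ x ≠ q.snd
    · obtain ⟨x, hux, hxv, hxq⟩ := hx
      exact .inr (.inr ⟨v, u, x, hxv.symm, hv,
        hleaf hux.symm fun h => hxq (hG.eq_snd_of_adj_start hp.of_cons hux h)⟩)
    · push Not at hx
      exact .inr (.inl ⟨v, u, q.snd, hv, fun x hux => or_iff_not_imp_left.2 (hx x hux)⟩)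

theorem exists_isolated_or_pendant_mem (hG : G.IsAcyclic) {S : Finset V} (hS : S.Nonempty) :
    (∃ v ∈ S, ∀ x ∈ S, ¬G.Adj v x) ∨
    (∃ v ∈ S, ∃ u ∈ S, ∃ w, (∀ x ∈ S, G.Adj v x ↔ x = u) ∧
      ∀ x ∈ S, G.Adj u x → x = v ∨ x = w) ∨
    ∃ v ∈ S, ∃ u ∈ S, ∃ x ∈ S, v ≠ x ∧
      (∀ y ∈ S, G.Adj v y ↔ y = u) ∧ ∀ y ∈ S, G.Adj x y ↔ y = u := by
  have := hS.to_subtype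
  rcases exists_isolated_or_pendant (hG.induce (S : Set V)) with
    ⟨v, hv⟩ | ⟨v, u, w, hv, hu⟩ | ⟨v, u, x, hvx, hv, hx⟩
  · exact .inl ⟨v, v.2, fun x hx => hv ⟨x, hx⟩⟩
  · exact .inr (.inl ⟨v, v.2, u, u.2, w, fun x hx => by simpa [Subtype.ext_iff] using hv ⟨x, hx⟩,
      fun x hx => by simpa [Subtype.ext_iff] using hu ⟨x, hx⟩⟩)
  · exact .inr (.inr ⟨v, v.2, u, u.2, x, x.2, Subtype.coe_ne_coe.2 hvx,
      fun y hy => by simpa [Subtype.ext_iff] using hv ⟨y, hy⟩,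
      fun y hy => by simpa [Subtype.ext_iff] using hx ⟨y, hy⟩⟩)

theorem isChordless_of_isAcyclic (hG : G.IsAcyclic) {a b : V} {p : G.Walk a b} (hp : p.IsPath) :
    p.IsChordless := by
  rw [SimpleGraph.Walk.isChordless_iff_forall_mem_edges]
  induction p with
  | nil => simp
  | @cons a c b hac q ih =>
    have hstart : ∀ {y}, y ∈ (q.cons hac).support → G.Adj a y → s(a, y) ∈ (q.cons hac).edges := by
      intro y hy hay
      simp [hG.eq_snd_of_adj_start hp hay hy]
    intro x y hx hy hxy
    rcases List.mem_cons.1 hx with rfl | hxq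
    · exact hstart hy hxy
    rcases List.mem_cons.1 hy with rfl | hyq
    · exact Sym2.eq_swap ▸ hstart hx hxy.symm
    · exact List.mem_cons_of_mem _ (ih hp.of_cons hxq hyq hxy)

theorem eq_start_or_eq_end_of_forall_adj_eq {a b u w : V} {p : G.Walk a b} (hp : p.IsPath)
    (hu : u ∈ p.support) (hw : ∀ x ∈ p.support, G.Adj u x → x = w) : u = a ∨ u = b := by
  obtain ⟨i, rfl, hi⟩ := SimpleGraph.Walk.mem_support_iff_exists_getVert.1 hu
  by_contra! h
  have hi0 : i ≠ 0 := fun h0 => h.1 (by simp [h0])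
  have hil : i ≠ p.length := fun hl => h.2 (by simp [hl])
  have hpred : p.getVert (i - 1) = w := hw _ (p.getVert_mem_support _) <| by
    simpa [Nat.sub_add_cancel (Nat.pos_of_ne_zero hi0)] using
      (p.adj_getVert_succ (i := i - 1) (by lia)).symm
  have hsucc : p.getVert (i + 1) = w :=
    hw _ (p.getVert_mem_support _) (p.adj_getVert_succ (by lia))
  have hpred_mem : i - 1 ∈ {j | j ≤ p.length} := (Nat.sub_le _ _).trans hi
  have hsucc_mem : i + 1 ∈ {j | j ≤ p.length} := Nat.lt_of_le_of_ne hi hil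
  have := hp.getVert_injOn hpred_mem hsucc_mem (hpred.trans hsucc.symm)
  lia

end Acyclic

section Pattern

variable {V K : Type*} [Field K] {G : SimpleGraph V}

/-- `A` has the off-diagonal zero–nonzero pattern of `G`. Symmetry is not part of the notion. -/
def HasPattern (G : SimpleGraph V) (A : Matrix V V K) : Prop :=
  ∀ i j, i ≠ j → (A i j ≠ 0 ↔ G.Adj i j)

variable [Fintype V] {A : Matrix V V K}

theorem HasPattern.exists_adj_ne_of_mulVec_eq_zero (hA : HasPattern G A) {x : V → K}
    (hx : A *ᵥ x = 0) {a b : V} (hab : G.Adj a b) (ha : x a = 0) (hb : x b ≠ 0) :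
    ∃ c, c ≠ b ∧ G.Adj a c ∧ x c ≠ 0 := by
  by_contra! h
  have hrow : ∑ c, A a c * x c = A a b * x b := Fintype.sum_eq_single b fun c hcb => by
    rw [mul_eq_zero, or_iff_not_imp_right]
    intro hc
    have hac : a ≠ c := by rintro rfl; exact hc ha
    exact not_not.1 fun hA0 => hc (h c hcb ((hA a c hac).1 hA0))
  exact mul_ne_zero ((hA a b hab.ne).2 hab) hb (hrow.symm.trans (congrFun hx a))

theorem HasPattern.eq_zero_of_mulVec_eq_zero (hA : HasPattern G A) (hG : G.IsAcyclic) {Z : Set V}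
    {p : V → V} (hp : ∀ v ∉ Z, G.Adj (p v) v) (hinj : Set.InjOn p Zᶜ)
    (hcyc : ∀ v ∉ Z, p v ∉ Z → p (p v) ≠ v) {x : V → K} (hx : A *ᵥ x = 0)
    (hZ : ∀ v ∈ Z, x v = 0) : x = 0 := by
  have hZc : ∀ {v}, x v ≠ 0 → v ∉ Z := fun hv hvZ => hv (hZ _ hvZ)
  by_contra hne
  obtain ⟨v₀, hv₀⟩ := Function.ne_iff.1 hne
  let U : Set V := {u | x u ≠ 0 ∨ ∃ b, x b ≠ 0 ∧ p b = u}
  have hstep : ∀ u : U, ∃ y : U, G.Adj u y ∧ (x u ≠ 0 → y = p u) ∧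
      (x u = 0 → x y ≠ 0 ∧ p y ≠ u) := by
    rintro ⟨u, hu⟩
    by_cases hxu : x u = 0
    · obtain ⟨b, hb, rfl⟩ := hu.resolve_left (not_not.2 hxu)
      obtain ⟨c, hcb, hadj, hc⟩ := hA.exists_adj_ne_of_mulVec_eq_zero hx (hp b (hZc hb)) hxu hb
      exact ⟨⟨c, .inl hc⟩, hadj, absurd hxu, fun _ => ⟨hc, hinj.ne (hZc hc) (hZc hb) hcb⟩⟩
    · exact ⟨⟨p u, .inr ⟨u, hxu, rfl⟩⟩, (hp u (hZc hxu)).symm, fun _ => rfl, fun h => absurd h hxu⟩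
  choose f hadj hpred hjump using hstep
  have : Nonempty U := ⟨⟨v₀, .inl hv₀⟩⟩
  obtain ⟨u, hu⟩ := exists_apply_apply_eq_of_forall_adj (hG.induce U) hadj
  have hfu := hpred (f u)
  have hfu' := hjump (f u)
  rw [hu] at hfu hfu'
  by_cases hxu : x u = 0
  · exact (hjump u hxu).2 (hfu (hjump u hxu).1).symm
  by_cases hxfu : x (f u) = 0
  · exact (hfu' hxfu).2 (hpred u hxu).symm
  · exact hcyc u (hZc hxu) (hpred u hxu ▸ hZc hxfu) (by rw [← hpred u hxu, ← hfu hxfu])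

theorem HasPattern.finrank_ker_mulVecLin_le_card (hA : HasPattern G A) (hG : G.IsAcyclic)
    {Z : Finset V} {p : V → V} (hp : ∀ v ∉ Z, G.Adj (p v) v) (hinj : Set.InjOn p (Z : Set V)ᶜ)
    (hcyc : ∀ v ∉ Z, p v ∉ Z → p (p v) ≠ v) : finrank K A.mulVecLin.ker ≤ Z.card := by
  let restrict : A.mulVecLin.ker →ₗ[K] (Z → K) :=
    (LinearMap.funLeft K K Subtype.val).comp A.mulVecLin.ker.subtype
  have hrestrict : Function.Injective restrict := by
    rw [← LinearMap.ker_eq_bot, LinearMap.ker_eq_bot']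
    rintro ⟨x, hx⟩ hxZ
    exact Subtype.ext (hA.eq_zero_of_mulVec_eq_zero (Z := Z) hG hp hinj hcyc (by simpa using hx)
      fun v hv => congrFun hxZ ⟨v, hv⟩)
  simpa using LinearMap.finrank_le_finrank_of_injective hrestrict

end Pattern

section PathSet

variable {V : Type*} [Fintype V] [DecidableEq V] {G : SimpleGraph V}

theorem IsPathSet.exists_index {s : Finset V} (hs : IsPathSet G s) :
    ∃ pos : V → ℕ, Set.InjOn pos s ∧
      ∀ v ∈ s, pos v ≠ 0 → ∃ w ∈ s, G.Adj w v ∧ pos w + 1 = pos v := by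
  obtain ⟨m, ⟨e⟩⟩ := hs
  obtain ⟨pos, hpos⟩ : ∃ pos : V → ℕ, ∀ v (hv : v ∈ s), pos v = e ⟨v, hv⟩ :=
    ⟨fun v => if h : v ∈ s then e ⟨v, h⟩ else 0, fun v hv => dif_pos hv⟩
  refine ⟨pos, fun v hv w hw hvw => ?_, fun v hv hv0 => ?_⟩
  · rw [hpos v hv, hpos w hw] at hvw
    exact congrArg Subtype.val (e.injective (Fin.ext hvw))
  · rw [hpos v hv] at hv0 ⊢
    let w := e.symm ⟨e ⟨v, hv⟩ - 1, by lia⟩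
    have hew : (e w : ℕ) + 1 = e ⟨v, hv⟩ := by
      simp only [w, RelIso.apply_symm_apply]
      lia
    refine ⟨w, w.2, ?_, by rw [hpos w w.2]; exact hew⟩
    exact e.map_adj_iff.1 (SimpleGraph.pathGraph_adj.2 (.inl hew))

theorem exists_index_of_pathCover {P : Finset (Finset V)} (hP : ∀ s ∈ P, IsPathSet G s)
    (hcover : ∀ v, ∃! s, s ∈ P ∧ v ∈ s) :
    ∃ (part : V → Finset V) (pos : V → ℕ), (∀ v, part v ∈ P) ∧
      (∀ v w, part v = part w → pos v = pos w → v = w) ∧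
      ∀ v, pos v ≠ 0 → ∃ w, G.Adj w v ∧ part w = part v ∧ pos w + 1 = pos v := by
  choose part hpart hunique using hcover
  choose! idx hinj hpred using fun s hs => (hP s hs).exists_index
  refine ⟨part, fun v => idx (part v) v, fun v => (hpart v).1, fun v w hvw hidx => ?_,
    fun v hv => ?_⟩
  · simp only [← hvw] at hidx
    exact hinj _ (hpart v).1 (hpart v).2 (hvw ▸ (hpart w).2) hidx
  · obtain ⟨w, hw, hadj, hidx⟩ := hpred _ (hpart v).1 v (hpart v).2 hv
    have hwv : part w = part v := (hunique w _ ⟨(hpart v).1, hw⟩).symm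
    exact ⟨w, hadj, hwv, by simpa only [hwv] using hidx⟩

theorem HasPattern.finrank_ker_mulVecLin_le_card_pathCover {K : Type*} [Field K]
    {A : Matrix V V K} (hA : HasPattern G A) (hG : G.IsAcyclic) {P : Finset (Finset V)}
    (hP : ∀ s ∈ P, IsPathSet G s) (hcover : ∀ v, ∃! s, s ∈ P ∧ v ∈ s) :
    finrank K A.mulVecLin.ker ≤ P.card := by
  obtain ⟨part, pos, hpart, hinj, hpred⟩ := exists_index_of_pathCover hP hcover
  choose! p hadj hpartp hposp using hpred
  let Z : Finset V := {v | pos v = 0}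
  have hmem : ∀ v, v ∈ Z ↔ pos v = 0 := by simp [Z]
  have hZ : ∀ {v}, v ∉ Z → pos v ≠ 0 := fun hv h0 => hv ((hmem _).2 h0)
  have hpinj : Set.InjOn p (Z : Set V)ᶜ := fun v hv w hw hvw => by
    refine hinj v w ?_ ?_
    · rw [← hpartp v (hZ hv), hvw, hpartp w (hZ hw)]
    · rw [← hposp v (hZ hv), hvw, hposp w (hZ hw)]
  have hcyc : ∀ v ∉ Z, p v ∉ Z → p (p v) ≠ v := fun v hv hpv heq => by
    have := hposp v (hZ hv)
    have := hposp (p v) (hZ hpv)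
    grind
  refine (hA.finrank_ker_mulVecLin_le_card hG (fun v hv => hadj v (hZ hv)) hpinj hcyc).trans ?_
  refine Finset.card_le_card_of_injOn part (fun v _ => hpart v)
    fun v hv w hw hvw => hinj v w hvw ?_
  rw [(hmem v).1 hv, (hmem w).1 hw]

end PathSet

section PathCover

variable {V : Type*} [DecidableEq V] {G : SimpleGraph V}

/-- `s` is the vertex set of a path of `G`. For forests this strengthens `IsPathSet` only by
excluding `∅`, and it is easier to extend. -/
def IsPathSupport (G : SimpleGraph V) (s : Finset V) : Prop :=
  ∃ (a b : V) (p : G.Walk a b), p.IsPath ∧ p.support.toFinset = s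

theorem IsPathSupport.singleton (v : V) : IsPathSupport G {v} :=
  ⟨v, v, .nil, .nil, by simp⟩

theorem IsPathSupport.nonempty {s : Finset V} (hs : IsPathSupport G s) : s.Nonempty := by
  obtain ⟨a, b, p, -, rfl⟩ := hs
  exact ⟨a, by simp⟩

theorem IsPathSupport.insert_endpoint {s : Finset V} (hs : IsPathSupport G s) {u v w : V}
    (hu : u ∈ s) (hv : v ∉ s) (hvu : G.Adj v u) (hw : ∀ x ∈ s, G.Adj u x → x = w) :
    IsPathSupport G (insert v s) := by
  obtain ⟨a, b, p, hp, rfl⟩ := hs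
  simp only [List.mem_toFinset] at hu hv hw
  rcases eq_start_or_eq_end_of_forall_adj_eq hp hu hw with rfl | rfl
  · exact ⟨v, b, p.cons hvu, hp.cons hv, by simp⟩
  · exact ⟨v, a, p.reverse.cons hvu, hp.reverse.cons (by simpa using hv), by simp⟩

theorem IsPathSupport.cherry {u v x : V} (hvx : v ≠ x) (hv : G.Adj v u) (hx : G.Adj x u) :
    IsPathSupport G {v, x, u} := by
  have hxu : IsPathSupport G {x, u} := (singleton u).insert_endpoint (Finset.mem_singleton_self u)
    (by simp [hx.ne]) hx (w := u) (by simp)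
  exact hxu.insert_endpoint (by simp) (by simp [hvx, hv.ne]) hv (w := x) (by simp)

theorem IsPathSupport.isPathSet [Fintype V] {s : Finset V} (hs : IsPathSupport G s)
    (hG : G.IsAcyclic) : IsPathSet G s := by
  obtain ⟨a, b, p, hp, rfl⟩ := hs
  have hinduced : p.toSubgraph.IsInduced :=
    SimpleGraph.Walk.isInduced_toSubgraph.2 (isChordless_of_isAcyclic hG hp)
  have hverts : ((p.support.toFinset : Finset V) : Set V) = p.toSubgraph.verts := by ext; simp
  refine ⟨p.length + 1, ⟨RelIso.trans ⟨Equiv.setCongr hverts, ?_⟩ hp.pathGraphIsoToSubgraph.symm⟩⟩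
  intro x y
  exact hinduced.adj

/-- `S` is partitioned by the vertex sets of `k` paths of `G`: the path covers of the induced
subforests of a forest `G`, built up one vertex or one path at a time. -/
def HasPathCover (G : SimpleGraph V) (S : Finset V) (k : ℕ) : Prop :=
  ∃ P : Finpartition S, P.parts.card = k ∧ ∀ s ∈ P.parts, IsPathSupport G s

theorem HasPathCover.empty : HasPathCover G ∅ 0 :=
  ⟨Finpartition.empty _, by simp⟩

theorem HasPathCover.union {S s : Finset V} {k : ℕ} (hS : HasPathCover G S k)
    (hs : IsPathSupport G s) (hSs : Disjoint S s) : HasPathCover G (S ∪ s) (k + 1) := by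
  obtain ⟨P, rfl, hP⟩ := hS
  exact ⟨P.extend hs.nonempty.ne_empty hSs rfl, P.card_extend .., by
    simpa [Finpartition.extend] using ⟨hs, hP⟩⟩

theorem HasPathCover.insert_leaf {S : Finset V} {k : ℕ} (hS : HasPathCover G S k) {u v w : V}
    (hu : u ∈ S) (hv : v ∉ S) (hvu : G.Adj v u) (hw : ∀ x ∈ S, G.Adj u x → x = w) :
    HasPathCover G (insert v S) k := by
  obtain ⟨P, rfl, hP⟩ := hS
  obtain ⟨s, hs, hus⟩ := P.exists_mem hu
  let R := (P.parts.erase s).sup id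
  have hRs : R ∪ s = S := by
    rw [← P.sup_parts, ← Finset.insert_erase hs, Finset.sup_insert, Finset.union_comm]
    rfl
  have hdisj : Disjoint R s :=
    (P.supIndep (Finset.erase_subset s _) hs (Finset.notMem_erase s _)).symm
  have hvR : v ∉ R := fun h => hv (hRs ▸ Finset.mem_union_left _ h)
  have hpath : IsPathSupport G (insert v s) :=
    (hP s hs).insert_endpoint hus (fun h => hv (P.subset hs h)) hvu
      fun x hx => hw x (P.subset hs hx)
  have hR : HasPathCover G R (P.parts.card - 1) :=
    ⟨P.ofSubset (Finset.erase_subset s _) rfl, Finset.card_erase_of_mem hs,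
      fun t ht => hP t (Finset.mem_of_mem_erase ht)⟩
  convert hR.union hpath (by simp [hvR, hdisj]) using 1
  · rw [Finset.union_insert, hRs]
  · exact (Nat.sub_add_cancel (Finset.card_pos.2 ⟨s, hs⟩)).symm

theorem HasPathCover.exists_pathCover [Fintype V] {k : ℕ} (h : HasPathCover G Finset.univ k)
    (hG : G.IsAcyclic) : ∃ P : Finset (Finset V), P.card = k ∧ (∀ s ∈ P, IsPathSet G s) ∧
      ∀ v, ∃! s, s ∈ P ∧ v ∈ s := by
  obtain ⟨P, hcard, hP⟩ := h
  exact ⟨P.parts, hcard, fun s hs => (hP s hs).isPathSet hG,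
    fun v => P.existsUnique_mem (Finset.mem_univ v)⟩

end PathCover

section PrincipalKer

variable {V K : Type*} [Fintype V] [Field K]

theorem finrank_le_finrank_inf_ker_add_one {M : Type*} [AddCommGroup M] [Module K M]
    [FiniteDimensional K M] (W : Submodule K M) (φ : Dual K M) :
    finrank K W ≤ finrank K ↥(W ⊓ φ.ker) + 1 := by
  have hsup := Submodule.finrank_sup_add_finrank_inf_eq W φ.ker
  have hker := φ.finrank_range_add_finrank_ker
  have hrange := φ.range.finrank_le
  have hle := (W ⊔ φ.ker).finrank_le
  rw [finrank_self] at hrange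
  lia

/-- The kernel of the principal submatrix of `A` on `S`, as vectors of `V → K` supported in `S`. -/
def principalKer (A : Matrix V V K) (S : Finset V) : Submodule K (V → K) :=
  Submodule.pi (Sᶜ : Set V) (fun _ => ⊥) ⊓ (Submodule.pi S fun _ => ⊥).comap A.mulVecLin

theorem mem_principalKer {A : Matrix V V K} {S : Finset V} {x : V → K} :
    x ∈ principalKer A S ↔ (∀ i ∉ S, x i = 0) ∧ ∀ i ∈ S, (A *ᵥ x) i = 0 := by
  simp [principalKer]

theorem principalKer_univ (A : Matrix V V K) : principalKer A Finset.univ = A.mulVecLin.ker := by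
  ext x
  simp [mem_principalKer, funext_iff]

end PrincipalKer

section DiagonalShift

variable {V K : Type*} [DecidableEq V] [Field K] {G : SimpleGraph V} [DecidableRel G.Adj]

theorem hasPattern_adjMatrix_add_diagonal (d : V → K) :
    HasPattern G (G.adjMatrix K + diagonal d) := fun i j hij => by
  simp [hij, SimpleGraph.adjMatrix_apply]

theorem isSymm_adjMatrix_add_diagonal (d : V → K) : (G.adjMatrix K + diagonal d).IsSymm :=
  G.isSymm_adjMatrix.add (isSymm_diagonal d)

variable [Fintype V] {S : Finset V} {k : ℕ}

theorem adjMatrix_add_diagonal_mulVec_apply (d x : V → K) (i : V) :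
    ((G.adjMatrix K + diagonal d) *ᵥ x) i = ∑ j with G.Adj i j, x j + d i * x i := by
  simp [add_mulVec, mulVec_diagonal, SimpleGraph.neighborFinset_eq_filter]

/- The entry `-1` at the new leaf `v` makes its row read `x u = x v`, and lowering the entry of `u`
by `1` compensates for the new term `x v` in the row of `u`. -/
theorem add_single_mem_principalKer_insert {d x : V → K} {u v : V}
    (hx : x ∈ principalKer (G.adjMatrix K + diagonal d) S) (hu : u ∈ S) (hv : v ∉ S)
    (hadj : ∀ y ∈ S, G.Adj v y ↔ y = u) :
    x + Pi.single v (x u) ∈ principalKer (G.adjMatrix K +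
      diagonal (Function.update (Function.update d u (d u - 1)) v (-1))) (insert v S) := by
  rw [mem_principalKer] at hx ⊢
  refine ⟨fun i hi => by simp [hx.1 i (by grind), show i ≠ v by grind], fun i hi => ?_⟩
  have hrow := hx.2 i
  rw [adjMatrix_add_diagonal_mulVec_apply] at hrow ⊢
  have hsum : ∑ j with G.Adj i j, (x + Pi.single v (x u) : V → K) j =
      ∑ j with G.Adj i j, x j + if G.Adj i v then x u else 0 := by
    simp [Pi.single_apply, Finset.sum_add_distrib]
  rw [hsum]
  rcases Finset.mem_insert.1 hi with rfl | hiS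
  · have hnbr : ∑ j with G.Adj i j, x j = x u :=
      Finset.sum_eq_single_of_mem u (by simp [hadj u hu]) fun j hj hju =>
        hx.1 j fun hjS => hju ((hadj j hjS).1 (by simpa using hj))
    simp [hnbr, hx.1 i hv]
  have hiv : i ≠ v := ne_of_mem_of_not_mem hiS hv
  simp only [G.adj_comm i v, hadj i hiS]
  by_cases hiu : i = u
  · subst hiu
    simp only [if_true, Pi.add_apply, Pi.single_eq_of_ne hiv, Function.update_self,
      Function.update_of_ne hiv]
    linear_combination hrow hu
  · simpa [hiu, hiv] using hrow hiS

/-- Some matrix with the pattern of `G`, namely the adjacency matrix with a modified diagonal, has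
a principal submatrix on `S` of nullity at least `k`. -/
def NullityAtLeast (K : Type*) [Field K] (G : SimpleGraph V) [DecidableRel G.Adj] (S : Finset V)
    (k : ℕ) : Prop :=
  ∃ d : V → K, k ≤ finrank K (principalKer (G.adjMatrix K + diagonal d) S)

theorem NullityAtLeast.empty : NullityAtLeast K G ∅ 0 :=
  ⟨0, Nat.zero_le _⟩

theorem NullityAtLeast.insert_isolated (h : NullityAtLeast K G S k) {v : V} (hv : v ∉ S)
    (hadj : ∀ x ∈ S, ¬G.Adj v x) : NullityAtLeast K G (insert v S) (k + 1) := by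
  obtain ⟨d, hd⟩ := h
  refine ⟨Function.update d v 0, hd.trans_lt (Submodule.finrank_lt_finrank_of_lt ?_)⟩
  have hne : ∀ i ∈ S, i ≠ v := fun i hi h => hv (h ▸ hi)
  refine SetLike.lt_iff_le_and_exists.2 ⟨fun x hx => ?_, Pi.single v 1, ?_, fun h => ?_⟩
  · rw [mem_principalKer] at hx ⊢
    refine ⟨fun i hi => hx.1 i (by grind), fun i hi => ?_⟩
    have hrow := hx.2 i
    rw [adjMatrix_add_diagonal_mulVec_apply] at hrow ⊢
    rcases Finset.mem_insert.1 hi with rfl | hiS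
    · simp only [Function.update_self, zero_mul, add_zero]
      exact Finset.sum_eq_zero fun j hj => hx.1 j fun hjS => hadj j hjS (by simpa using hj)
    · rw [Function.update_of_ne (hne i hiS)]
      exact hrow hiS
  · rw [mem_principalKer]
    refine ⟨fun i hi => by simp [show i ≠ v by grind], fun i hi => ?_⟩
    rw [adjMatrix_add_diagonal_mulVec_apply]
    rcases Finset.mem_insert.1 hi with rfl | hiS
    · simp
    · simpa [hne i hiS, G.adj_comm i v] using hadj i hiS
  · simpa using (mem_principalKer.1 h).1 v hv

theorem NullityAtLeast.insert_leaf (h : NullityAtLeast K G S k) {u v : V} (hu : u ∈ S)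
    (hv : v ∉ S) (hadj : ∀ y ∈ S, G.Adj v y ↔ y = u) : NullityAtLeast K G (insert v S) k := by
  obtain ⟨d, hd⟩ := h
  let e : (V → K) ≃ₗ[K] (V → K) := LinearEquiv.transvection (f := LinearMap.proj u)
    (v := Pi.single v 1) (by simp [ne_of_mem_of_not_mem hu hv])
  have he : ∀ x, e x = x + Pi.single v (x u) := fun x => by
    simp [e, LinearMap.transvection.apply, ← Pi.single_smul]
  refine ⟨Function.update (Function.update d u (d u - 1)) v (-1), hd.trans ?_⟩
  rw [← e.finrank_map_eq]
  refine Submodule.finrank_mono ?_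
  rintro _ ⟨x, hx, rfl⟩
  rw [LinearEquiv.coe_coe, he]
  exact add_single_mem_principalKer_insert hx hu hv hadj

theorem NullityAtLeast.insert_of_succ (h : NullityAtLeast K G S (k + 1)) {u : V} (hu : u ∉ S) :
    NullityAtLeast K G (insert u S) k := by
  obtain ⟨d, hd⟩ := h
  refine ⟨d, ?_⟩
  let row : Dual K (V → K) :=
    (LinearMap.proj u).comp (G.adjMatrix K + diagonal d).mulVecLin
  have hle : principalKer (G.adjMatrix K + diagonal d) S ⊓ row.ker ≤
      principalKer (G.adjMatrix K + diagonal d) (insert u S) := by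
    rintro x ⟨hx, hxu⟩
    rw [SetLike.mem_coe, mem_principalKer] at hx
    refine mem_principalKer.2 ⟨fun i hi => hx.1 i (by grind), fun i hi => ?_⟩
    rcases Finset.mem_insert.1 hi with rfl | hiS
    · exact hxu
    · exact hx.2 i hiS
  have := finrank_le_finrank_inf_ker_add_one (principalKer (G.adjMatrix K + diagonal d) S) row
  have := Submodule.finrank_mono hle
  lia

theorem NullityAtLeast.union_cherry (h : NullityAtLeast K G S k) {u v x : V} (hvx : v ≠ x)
    (hS : Disjoint S {v, x, u}) (hv : ∀ y ∈ S ∪ {v, x, u}, G.Adj v y ↔ y = u)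
    (hx : ∀ y ∈ S ∪ {v, x, u}, G.Adj x y ↔ y = u) :
    NullityAtLeast K G (S ∪ {v, x, u}) (k + 1) := by
  have hvu : v ≠ u := ((hv u (by simp)).2 rfl).ne
  have hxu : x ≠ u := ((hx u (by simp)).2 rfl).ne
  obtain ⟨hvS, hxS, huS⟩ : v ∉ S ∧ x ∉ S ∧ u ∉ S := by simpa using hS
  have hleaves : NullityAtLeast K G (insert x (insert v S)) (k + 1 + 1) :=
    (h.insert_isolated hvS (by grind)).insert_isolated (by simp [hxS, hvx.symm]) (by grind)
  have hunion : S ∪ {v, x, u} = insert u (insert x (insert v S)) := by grind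
  rw [hunion]
  exact hleaves.insert_of_succ (by simp [huS, hvu.symm, hxu.symm])

end DiagonalShift

section MinRank

variable {V : Type*} [Fintype V] {G : SimpleGraph V}

/-- The minimum rank of a symmetric matrix over `K` with the off-diagonal pattern of `G`. -/
noncomputable def minRank (K : Type*) [Field K] (G : SimpleGraph V) : ℕ :=
  sInf {r | ∃ A : Matrix V V K, (A.IsSymm ∧ HasPattern G A) ∧ A.rank = r}

theorem minRank_le {K : Type*} [Field K] {A : Matrix V V K} (hsymm : A.IsSymm)
    (hA : HasPattern G A) : minRank K G ≤ A.rank :=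
  Nat.sInf_le ⟨A, ⟨hsymm, hA⟩, rfl⟩

theorem exists_rank_eq_minRank (K : Type*) [Field K] (G : SimpleGraph V) :
    ∃ A : Matrix V V K, HasPattern G A ∧ A.rank = minRank K G := by
  classical
  obtain ⟨A, ⟨-, hA⟩, hrank⟩ : minRank K G ∈
      {r | ∃ A : Matrix V V K, (A.IsSymm ∧ HasPattern G A) ∧ A.rank = r} :=
    Nat.sInf_mem ⟨_, _, ⟨isSymm_adjMatrix_add_diagonal 0, hasPattern_adjMatrix_add_diagonal 0⟩, rfl⟩
  exact ⟨A, hA, hrank⟩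

theorem rank_add_finrank_ker_mulVecLin {K : Type*} [Field K] (A : Matrix V V K) :
    A.rank + finrank K A.mulVecLin.ker = Fintype.card V := by
  simpa [Matrix.rank] using A.mulVecLin.finrank_range_add_finrank_ker

end MinRank

section Duality

variable {V : Type*} [Fintype V] [DecidableEq V] {G : SimpleGraph V}

theorem exists_hasPathCover_and_nullityAtLeast (K : Type*) [Field K] [DecidableRel G.Adj]
    (hG : G.IsAcyclic) (S : Finset V) : ∃ k, HasPathCover G S k ∧ NullityAtLeast K G S k := by
  induction S using Finset.strongInduction with
  | H S ih =>
    rcases S.eq_empty_or_nonempty with rfl | hS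
    · exact ⟨0, .empty, .empty⟩
    rcases exists_isolated_or_pendant_mem hG hS with
      ⟨v, hvS, hv⟩ | ⟨v, hvS, u, huS, w, hv, hu⟩ | ⟨v, hvS, u, huS, x, hxS, hvx, hv, hx⟩
    · obtain ⟨k, hcover, hnull⟩ := ih _ (Finset.erase_ssubset hvS)
      rw [← Finset.insert_erase hvS]
      refine ⟨k + 1, ?_, hnull.insert_isolated (S.notMem_erase v)
        fun x hx => hv x (Finset.mem_of_mem_erase hx)⟩
      rw [Finset.insert_eq, Finset.union_comm]
      exact hcover.union (.singleton v) (by simp)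
    · obtain ⟨k, hcover, hnull⟩ := ih _ (Finset.erase_ssubset hvS)
      have hvu : G.Adj v u := (hv u huS).2 rfl
      have huS' : u ∈ S.erase v := Finset.mem_erase.2 ⟨hvu.ne', huS⟩
      rw [← Finset.insert_erase hvS]
      refine ⟨k, hcover.insert_leaf (w := w) huS' (S.notMem_erase v) hvu fun x hx hux => ?_,
        hnull.insert_leaf huS' (S.notMem_erase v) fun x hx => hv x (Finset.mem_of_mem_erase hx)⟩
      exact (hu x (Finset.mem_of_mem_erase hx) hux).resolve_left (Finset.ne_of_mem_erase hx)
    · have hsub : {v, x, u} ⊆ S := by grind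
      obtain ⟨k, hcover, hnull⟩ := ih _ (Finset.sdiff_ssubset hsub ⟨v, by simp⟩)
      rw [← Finset.sdiff_union_of_subset hsub] at hv hx ⊢
      have hu : u ∈ S \ {v, x, u} ∪ {v, x, u} := by simp
      exact ⟨k + 1,
        hcover.union (.cherry hvx ((hv u hu).2 rfl) ((hx u hu).2 rfl)) Finset.sdiff_disjoint,
        hnull.union_cherry hvx Finset.sdiff_disjoint hv hx⟩

theorem stmt10_general (K : Type*) [Field K] (hG : G.IsAcyclic) :
    minRank K G + pathCoverNumber G = Fintype.card V := by
  classical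
  obtain ⟨k, hcover, d, hd⟩ := exists_hasPathCover_and_nullityAtLeast K hG Finset.univ
  have hP := hcover.exists_pathCover hG
  apply le_antisymm
  · have hrank : minRank K G ≤ (G.adjMatrix K + diagonal d).rank :=
      minRank_le (isSymm_adjMatrix_add_diagonal d) (hasPattern_adjMatrix_add_diagonal d)
    have hcard : pathCoverNumber G ≤ k := Nat.sInf_le hP
    rw [principalKer_univ] at hd
    have := rank_add_finrank_ker_mulVecLin (G.adjMatrix K + diagonal d)
    lia
  · obtain ⟨A, hA, hrank⟩ := exists_rank_eq_minRank K G
    obtain ⟨P, hcard, hP, hpart⟩ : pathCoverNumber G ∈ {p | ∃ P : Finset (Finset V), P.card = p ∧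
        (∀ s ∈ P, IsPathSet G s) ∧ ∀ v, ∃! s, s ∈ P ∧ v ∈ s} := Nat.sInf_mem ⟨k, hP⟩
    have := rank_add_finrank_ker_mulVecLin A
    have := hA.finrank_ker_mulVecLin_le_card_pathCover hG hP hpart
    lia

end Duality

/-- Johnson–Duarte: mr(T) + P(T) = n for a tree T on n vertices. -/
theorem stmt10 {n : ℕ} (T : SimpleGraph (Fin n)) (hT : T.IsTree) :
    mr T + pathCoverNumber T = n :=
  (stmt10_general ℝ hT.isAcyclic).trans (Fintype.card_fin n)
end

section
/- Let T be a tree on n vertices with vertex set V. Define f_T(S) = |E_T(S)| − 2|S| + 1, where E_T(S) is the set of edges of T incident to at least one vertex of S. Then the path cover number satisfies P(T) = max over all S ⊆ V of f_T(S), and this maximum also equals the maximum over 0 ≤ k ≤ n of (M_k(T) − k). -/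
open Matrix

/-- The maximal disconnection of `G` by `k` vertices: the maximum number of
connected components of an induced subgraph of `G` on `n - k` vertices. -/
noncomputable def MD {n : ℕ} (G : SimpleGraph (Fin n)) (k : ℕ) : ℕ :=
  Finset.sup (Finset.univ.filter fun s : Finset (Fin n) => s.card = n - k)
    fun s => Nat.card (SimpleGraph.induce (↑s : Set (Fin n)) G).ConnectedComponent

/-- The set of edges of `G` incident to at least one vertex of `S`. -/
def ETset {n : ℕ} (G : SimpleGraph (Fin n)) (S : Finset (Fin n)) : Set (Sym2 (Fin n)) :=
  {e ∈ G.edgeSet | ∃ v ∈ S, v ∈ e}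

/-- f_G(S) = |E_G(S)| − 2|S| + 1. -/
noncomputable def fT {n : ℕ} (G : SimpleGraph (Fin n)) (S : Finset (Fin n)) : ℤ :=
  ((ETset G S).ncard : ℤ) - 2 * S.card + 1

/-!
Let `H` be a subgraph of a forest `F` with all degrees at most two. Its components are paths, and
they are induced in `F` because `F` has no cycle; conversely the edges inside the paths of a path
cover form such an `H`. As a forest on `n` vertices with `m` edges has `n - m` components, the path
cover number of `F` is `n - max |E(H)|`.

Maximising `|E(H)|` is a degree-constrained subgraph problem. On forests it satisfies the min-max
formula `max |E(H)| = min_S (2|S| + |E(F - S)|)`, and the induction deleting a pendant edge goes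
through once the bound two is replaced by an arbitrary capacity at each vertex. Counting the
components of `F - S` turns `n - (2|S| + |E(F - S)|)` into `c(F - S) - |S|`, and counting those of
`F` turns it into `f_F(S) + c(F) - 1`.
-/

namespace PathCover

open SimpleGraph

section Forest

variable {V : Type*} {F G H : SimpleGraph V}

lemma mem_support_of_adj_of_forall_isPath_length_le {x y w : V} {p : G.Walk x y} (hp : p.IsPath)
    (hmax : ∀ (u v : V) (q : G.Walk u v), q.IsPath → q.length ≤ p.length) (hyw : G.Adj y w) :
    w ∈ p.support := by
  by_contra hw
  have := hmax _ _ (p.concat hyw) (hp.concat hw hyw)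
  rw [Walk.length_concat] at this
  omega

lemma exists_adj_forall_adj_eq [Finite V] (hF : F.IsAcyclic) (hne : F ≠ ⊥) :
    ∃ v u, F.Adj v u ∧ ∀ w, F.Adj v w → w = u := by
  obtain ⟨a, b, hab⟩ := ne_bot_iff_exists_adj.1 hne
  have : Nonempty V := ⟨a⟩
  obtain ⟨x, v, p, hp, hmax⟩ := Walk.exists_isPath_forall_isPath_length_le_length F
  have hnil : ¬p.Nil := fun hnil => by
    have := hmax _ _ hab.toWalk (by simp [hab.ne])
    simp [Walk.length_eq_zero_iff.2 hnil] at this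
  exact ⟨v, p.penultimate, (p.adj_penultimate hnil).symm, fun w hw =>
    hF.eq_penultimate_of_adj_end hp hw (mem_support_of_adj_of_forall_isPath_length_le hp hmax hw)⟩

lemma isAcyclic_induction [Finite V] {motive : SimpleGraph V → Prop} (bot : motive ⊥)
    (sup_edge : ∀ (F : SimpleGraph V) (v u : V), v ≠ u → (∀ w, ¬F.Adj v w) → motive F →
      motive (F ⊔ edge v u)) (hF : F.IsAcyclic) : motive F := by
  induction F using WellFoundedLT.induction with
  | ind F ih =>
    obtain rfl | hne := eq_or_ne F ⊥
    · exact bot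
    obtain ⟨v, u, hvu, hleaf⟩ := exists_adj_forall_adj_eq hF hne
    have hisolated : ∀ w, ¬(F \ edge v u).Adj v w := by
      rintro w ⟨hvw, hnot⟩
      obtain rfl := hleaf w hvw
      exact hnot (by simp [edge_adj, hvu.ne])
    have hsup : F \ edge v u ⊔ edge v u = F := by
      rw [sdiff_sup_self, F.sup_edge_of_adj hvu]
    have hlt : F \ edge v u < F :=
      lt_of_le_of_ne sdiff_le fun h => hisolated u (h.symm ▸ hvu)
    rw [← hsup]
    exact sup_edge _ v u hvu.ne hisolated (ih _ hlt (hF.anti sdiff_le))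

lemma ncard_edgeSet_induce (G : SimpleGraph V) (s : Set V) :
    (G.induce s).edgeSet.ncard = (G.edgeSet ∩ s.sym2).ncard := by
  rw [← Set.ncard_image_of_injective _ (Sym2.map.injective Subtype.val_injective)]
  congr 1
  ext e
  induction e with
  | _ a b =>
    constructor
    · rintro ⟨e, he, heq⟩
      induction e with
      | _ x y => exact heq ▸ ⟨he, x.2, y.2⟩
    · rintro ⟨he, ha, hb⟩
      exact ⟨s(⟨a, ha⟩, ⟨b, hb⟩), he, rfl⟩

lemma iUnion_edgeSet_inter_sym2_supp (G : SimpleGraph V) :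
    ⋃ c : G.ConnectedComponent, G.edgeSet ∩ c.supp.sym2 = G.edgeSet := by
  refine (Set.iUnion_subset fun _ => Set.inter_subset_left).antisymm fun e he => ?_
  induction e with
  | _ a b =>
    have hb := (G.connectedComponentMk a).mem_supp_of_adj_mem_supp rfl he
    exact Set.mem_iUnion_of_mem (G.connectedComponentMk a) ⟨he, rfl, hb⟩

lemma card_connectedComponent_add_ncard_edgeSet [Finite V] (hF : F.IsAcyclic) :
    Nat.card F.ConnectedComponent + F.edgeSet.ncard = Nat.card V := by
  have hcomponent (c : F.ConnectedComponent) :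
      1 + (F.edgeSet ∩ c.supp.sym2).ncard = c.supp.ncard := by
    rw [← ncard_edgeSet_induce, add_comm]
    exact (isTree_iff_connected_and_card.1 (hF.isTree_connectedComponent c)).2
  have hedges : F.edgeSet.ncard = ∑ᶠ c : F.ConnectedComponent,
      (F.edgeSet ∩ c.supp.sym2).ncard := by
    rw [← Set.ncard_iUnion_of_finite (fun _ => Set.toFinite _),
      iUnion_edgeSet_inter_sym2_supp]
    intro c d hcd
    refine Set.disjoint_left.2 fun e hc hd => ?_
    induction e with
    | _ a b => exact (F.pairwise_disjoint_supp_connectedComponent hcd).le_bot ⟨hc.2.1, hd.2.1⟩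
  calc
    Nat.card F.ConnectedComponent + F.edgeSet.ncard
      = ∑ᶠ c : F.ConnectedComponent, (1 + (F.edgeSet ∩ c.supp.sym2).ncard) := by
        rw [finsum_add_distrib (Set.toFinite _) (Set.toFinite _), ← hedges,
          ← finsum_mem_univ (fun _ => 1), finsum_one, Set.ncard_univ]
    _ = ∑ᶠ c : F.ConnectedComponent, c.supp.ncard := finsum_congr hcomponent
    _ = Nat.card V := by
        rw [← Set.ncard_iUnion_of_finite (fun _ => Set.toFinite _)
          F.pairwise_disjoint_supp_connectedComponent, iUnion_connectedComponentSupp,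
          Set.ncard_univ]

lemma adj_of_adj_of_reachable (hF : F.IsAcyclic) (hHF : H ≤ F) {a b : V} (hab : F.Adj a b)
    (h : H.Reachable a b) : H.Adj a b :=
  ((isAcyclic_iff_forall_adj_isBridge.1 hF hab).anti hHF).reachable_iff_adj.1 h

lemma induce_supp_eq_induce_supp (hF : F.IsAcyclic) (hHF : H ≤ F) (c : H.ConnectedComponent) :
    F.induce c.supp = H.induce c.supp := by
  ext a b
  exact ⟨fun hab => adj_of_adj_of_reachable hF hHF hab
    (ConnectedComponent.exact (a.2.trans b.2.symm)), fun hab => hHF hab⟩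

lemma toSubgraph_eq_top_of_forall_adj (hG : G.Preconnected) {x y : V} {p : G.Walk x y}
    (hp : ∀ a ∈ p.support, ∀ w, G.Adj a w → p.toSubgraph.Adj a w) : p.toSubgraph = ⊤ := by
  have hsupport (a : V) : a ∈ p.support := by
    induction (reachable_iff_reflTransGen x a).1 (hG x a) with
    | refl => exact p.start_mem_support
    | tail _ hbc hb => exact Walk.mem_support_of_adj_toSubgraph (hp _ hb _ hbc).symm
  ext a b
  · simp [hsupport]
  · exact ⟨fun h => h.adj_sub, fun h => hp a (hsupport a) b h⟩

lemma toSubgraph_adj_of_adj_end (hF : F.IsAcyclic) {x y w : V} {p : F.Walk x y} (hp : p.IsPath)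
    (hmax : ∀ (u v : V) (q : F.Walk u v), q.IsPath → q.length ≤ p.length) (hyw : F.Adj y w) :
    p.toSubgraph.Adj y w := by
  have hw := mem_support_of_adj_of_forall_isPath_length_le hp hmax hyw
  have hnil : ¬p.Nil := by
    rintro ⟨⟩
    exact hyw.ne' (by simpa using hw)
  rw [hF.eq_penultimate_of_adj_end hp hyw hw]
  exact (p.toSubgraph_adj_penultimate hnil).symm

lemma nonempty_iso_pathGraph [Finite V] (hF : F.IsTree)
    (hdeg : ∀ v, (F.neighborSet v).ncard ≤ 2) : ∃ m, Nonempty (F ≃g pathGraph m) := by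
  classical
  have := hF.connected.nonempty
  -- A longest path contains every neighbour of each of its vertices, so it is the whole tree.
  obtain ⟨x, y, p, hp, hmax⟩ := Walk.exists_isPath_forall_isPath_length_le_length F
  have hclosed : ∀ a ∈ p.support, ∀ w, F.Adj a w → p.toSubgraph.Adj a w := by
    intro a ha w haw
    obtain ⟨i, rfl, hi⟩ := Walk.mem_support_iff_exists_getVert.1 ha
    obtain rfl | hpos := i.eq_zero_or_pos
    · rw [Walk.getVert_zero] at haw ⊢
      rw [← Walk.toSubgraph_reverse]
      exact toSubgraph_adj_of_adj_end hF.isAcyclic hp.reverse (by simpa using hmax) haw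
    obtain rfl | hlt := hi.eq_or_lt
    · rw [Walk.getVert_length] at haw ⊢
      exact toSubgraph_adj_of_adj_end hF.isAcyclic hp hmax haw
    have hneighbors : p.toSubgraph.neighborSet (p.getVert i) = F.neighborSet (p.getVert i) := by
      refine Set.eq_of_subset_of_ncard_le (Subgraph.neighborSet_subset _ _) ?_ (Set.toFinite _)
      rw [hp.ncard_neighborSet_toSubgraph_internal_eq_two hpos.ne' hlt]
      exact hdeg _
    exact hneighbors.ge haw
  have hiso := hp.pathGraphIsoToSubgraph
  rw [toSubgraph_eq_top_of_forall_adj hF.connected.preconnected hclosed] at hiso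
  exact ⟨_, ⟨(hiso.trans Subgraph.topIso).symm⟩⟩

end Forest

section Duality

variable {V : Type*} {F G H : SimpleGraph V} {b : V → ℕ} {u v : V}

/-- The objective value of `S` in the problem dual to that of a largest subgraph of `G` with
degrees bounded by `b`: a vertex `v` costs `b v` and pays for all edges at `v`, and each edge
avoiding `S` costs one. -/
noncomputable def coverCost (G : SimpleGraph V) (b : V → ℕ) (S : Finset V) : ℕ :=
  ∑ v ∈ S, b v + (G.edgeSet ∩ (S : Set V)ᶜ.sym2).ncard

lemma ncard_edgeSet_le_coverCost [Finite V] (hHG : H ≤ G)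
    (hdeg : ∀ v, (H.neighborSet v).ncard ≤ b v) (S : Finset V) :
    H.edgeSet.ncard ≤ coverCost G b S := by
  have hsub : H.edgeSet ⊆
      (⋃ v ∈ S, (s(v, ·)) '' H.neighborSet v) ∪ G.edgeSet ∩ (S : Set V)ᶜ.sym2 := by
    intro e he
    by_cases h : ∃ v ∈ S, v ∈ e
    · obtain ⟨v, hv, w, rfl⟩ := h
      exact Or.inl (Set.mem_biUnion hv ⟨w, he, rfl⟩)
    · push Not at h
      exact Or.inr ⟨edgeSet_mono hHG he, Set.mem_sym2_iff_subset.2 fun v hve hv => h v hv hve⟩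
  calc
    H.edgeSet.ncard
      ≤ (⋃ v ∈ S, (s(v, ·)) '' H.neighborSet v).ncard
          + (G.edgeSet ∩ (S : Set V)ᶜ.sym2).ncard :=
        (Set.ncard_le_ncard hsub (Set.toFinite _)).trans (Set.ncard_union_le _ _)
    _ ≤ coverCost G b S := by
        refine Nat.add_le_add_right ((S.set_ncard_biUnion_le _).trans ?_) _
        exact Finset.sum_le_sum fun v _ => (Set.ncard_image_le (Set.toFinite _)).trans (hdeg v)

lemma edgeSet_sup_edge_subset (G : SimpleGraph V) (u v : V) :
    (G ⊔ edge v u).edgeSet ⊆ insert s(v, u) G.edgeSet := by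
  rw [edgeSet_sup, Set.insert_eq, Set.union_comm]
  exact Set.union_subset_union_left _ edgeSet_edge_subset

lemma sup_edge_inter_sym2_compl_subset {S : Finset V} {x : V} (hx : x ∈ s(v, u)) (hxS : x ∈ S) :
    (G ⊔ edge v u).edgeSet ∩ (S : Set V)ᶜ.sym2 ⊆ G.edgeSet ∩ (S : Set V)ᶜ.sym2 := by
  rintro e ⟨he, heS⟩
  obtain rfl | he := edgeSet_sup_edge_subset G u v he
  · exact absurd hxS (Set.mem_sym2_iff_subset.1 heS hx)
  · exact ⟨he, heS⟩

lemma coverCost_sup_edge_insert_le [Finite V] [DecidableEq V] {x : V} (hx : x ∈ s(v, u))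
    (hbx : b x = 0) (S : Finset V) :
    coverCost (G ⊔ edge v u) b (insert x S) ≤ coverCost G b S := by
  refine add_le_add (Finset.sum_insert_of_eq_zero_if_notMem fun _ => hbx).le
    (Set.ncard_le_ncard ((sup_edge_inter_sym2_compl_subset hx (S.mem_insert_self x)).trans ?_)
      (Set.toFinite _))
  have hcompl : ((insert x S : Finset V) : Set V)ᶜ ⊆ (S : Set V)ᶜ :=
    Set.compl_subset_compl.2 (Finset.coe_subset.2 (S.subset_insert x))
  exact fun e he => ⟨he.1, Set.mem_sym2_iff_subset.2 <|
    (Set.mem_sym2_iff_subset.1 he.2).trans hcompl⟩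

lemma coverCost_sup_edge_le [Finite V] [DecidableEq V] (G : SimpleGraph V) (b : V → ℕ) (u v : V)
    (S : Finset V) :
    coverCost (G ⊔ edge v u) b S ≤ coverCost G (b - Pi.single u 1) S + 1 := by
  have hsum : ∑ x ∈ S, b x ≤
      ∑ x ∈ S, (b - Pi.single u 1 : V → ℕ) x + if u ∈ S then 1 else 0 := by
    have hsingle : ∑ x ∈ S, (Pi.single u 1 : V → ℕ) x = if u ∈ S then 1 else 0 := by
      simp [Pi.single_apply]
    rw [← hsingle, ← Finset.sum_add_distrib]
    exact Finset.sum_le_sum fun x _ => le_tsub_add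
  have hedges : ((G ⊔ edge v u).edgeSet ∩ (S : Set V)ᶜ.sym2).ncard ≤
      (G.edgeSet ∩ (S : Set V)ᶜ.sym2).ncard + if u ∈ S then 0 else 1 := by
    split_ifs with hu
    · exact Set.ncard_le_ncard (sup_edge_inter_sym2_compl_subset (Sym2.mem_mk_right v u) hu)
        (Set.toFinite _)
    · refine (Set.ncard_le_ncard (t := insert s(v, u) (G.edgeSet ∩ (S : Set V)ᶜ.sym2)) ?_
        (Set.toFinite _)).trans (Set.ncard_insert_le _ _)
      rintro e ⟨he, heS⟩
      exact (edgeSet_sup_edge_subset G u v he).imp_right fun he => ⟨he, heS⟩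
  unfold coverCost
  split_ifs at hsum hedges <;> omega

lemma ncard_neighborSet_sup_edge_le [Finite V] [DecidableEq V] (G : SimpleGraph V) (u v w : V) :
    ((G ⊔ edge v u).neighborSet w).ncard ≤
      (G.neighborSet w).ncard + if w ∈ s(v, u) then 1 else 0 := by
  split_ifs with hw
  · obtain ⟨x, hx⟩ := hw
    refine (Set.ncard_le_ncard (t := insert x (G.neighborSet w)) ?_ (Set.toFinite _)).trans
      (Set.ncard_insert_le _ _)
    intro y hy
    have : s(w, y) ∈ insert s(w, x) G.edgeSet := hx ▸ edgeSet_sup_edge_subset G u v hy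
    exact this.imp_left Sym2.congr_right.1
  · refine Set.ncard_le_ncard (fun y hy => ?_) (Set.toFinite _)
    exact (edgeSet_sup_edge_subset G u v hy).resolve_left fun h => hw (h ▸ Sym2.mem_mk_left w y)

lemma ncard_edgeSet_sup_edge [Finite V] (huv : v ≠ u) (h : ¬G.Adj v u) :
    (G ⊔ edge v u).edgeSet.ncard = G.edgeSet.ncard + 1 := by
  rw [edgeSet_sup, edgeSet_edge_of_ne huv, Set.union_singleton,
    Set.ncard_insert_of_notMem (show s(v, u) ∉ G.edgeSet from h)]

theorem exists_coverCost_le_ncard_edgeSet [Finite V] (hF : F.IsAcyclic) (b : V → ℕ) :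
    ∃ H ≤ F, (∀ v, (H.neighborSet v).ncard ≤ b v) ∧
      ∃ S : Finset V, coverCost F b S ≤ H.edgeSet.ncard := by
  classical
  refine isAcyclic_induction (motive := fun F => ∀ b : V → ℕ, ∃ H ≤ F,
    (∀ v, (H.neighborSet v).ncard ≤ b v) ∧ ∃ S : Finset V, coverCost F b S ≤ H.edgeSet.ncard)
    (fun b => ⟨⊥, le_rfl, by simp, ∅, by simp [coverCost]⟩) (fun F v u hvu hv ih b => ?_) hF b
  -- `v` is a leaf attached to `u`. If one of them has capacity zero, it can be added to `S` for
  -- free; otherwise the edge `s(v, u)` is used, at the expense of one unit of the capacity of `u`.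
  by_cases hb : ∃ x ∈ s(v, u), b x = 0
  · obtain ⟨x, hx, hbx⟩ := hb
    obtain ⟨H, hHF, hdeg, S, hS⟩ := ih b
    exact ⟨H, hHF.trans le_sup_left, hdeg, insert x S,
      (coverCost_sup_edge_insert_le hx hbx S).trans hS⟩
  push Not at hb
  obtain ⟨H, hHF, hdeg, S, hS⟩ := ih (b - Pi.single u 1)
  have hv' : H.neighborSet v = ∅ := Set.eq_empty_of_forall_notMem fun w hw => hv w (hHF hw)
  refine ⟨H ⊔ edge v u, sup_le_sup_right hHF _, fun w => ?_, S, ?_⟩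
  · refine (ncard_neighborSet_sup_edge_le H u v w).trans ?_
    have hw : (H.neighborSet w).ncard ≤ b w - (Pi.single u 1 : V → ℕ) w := hdeg w
    obtain rfl | hwv := eq_or_ne w v
    · rw [hv', Set.ncard_empty, if_pos (Sym2.mem_mk_left w u), zero_add]
      exact Nat.one_le_iff_ne_zero.2 (hb w (Sym2.mem_mk_left w u))
    obtain rfl | hwu := eq_or_ne w u
    · have hbw := hb w (Sym2.mem_mk_right v w)
      rw [Pi.single_eq_same] at hw
      rw [if_pos (Sym2.mem_mk_right v w)]
      omega
    · rw [Pi.single_eq_of_ne hwu] at hw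
      rwa [if_neg fun h => (Sym2.mem_iff.1 h).elim hwv hwu]
  · rw [ncard_edgeSet_sup_edge hvu fun h => hv u (hHF h)]
    exact (coverCost_sup_edge_le F b u v S).trans (Nat.add_le_add_right hS 1)

end Duality

section PathSet

variable {V : Type*} {G : SimpleGraph V} {s : Finset V} {v : V}

lemma ncard_neighborSet_pathGraph_le_two {m : ℕ} (i : Fin m) :
    ((pathGraph m).neighborSet i).ncard ≤ 2 := by
  rw [← Set.ncard_image_of_injective _ Fin.val_injective]
  refine (Set.ncard_le_ncard (t := {i.val - 1, i.val + 1}) ?_ (Set.toFinite _)).trans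
    (Set.ncard_pair (by omega)).le
  rintro _ ⟨j, hj, rfl⟩
  obtain h | h := pathGraph_adj.1 hj
  · exact Or.inr h.symm
  · exact Or.inl (by omega)

lemma neighborSet_inter_eq_image_induce (G : SimpleGraph V) {s : Set V} (v : s) :
    G.neighborSet v ∩ s = Subtype.val '' (G.induce s).neighborSet v := by
  ext w
  simp

variable [Fintype V] [DecidableEq V]

lemma ncard_neighborSet_inter_le_two (hs : IsPathSet G s) (hv : v ∈ s) :
    (G.neighborSet v ∩ s).ncard ≤ 2 := by
  obtain ⟨m, ⟨e⟩⟩ := hs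
  rw [neighborSet_inter_eq_image_induce G (⟨v, hv⟩ : (s : Set V)),
    Set.ncard_image_of_injective _ Subtype.val_injective, ← Nat.card_coe_set_eq,
    Nat.card_congr (e.mapNeighborSet ⟨v, hv⟩), Nat.card_coe_set_eq]
  exact ncard_neighborSet_pathGraph_le_two _

lemma isPathSet_singleton (G : SimpleGraph V) (v : V) : IsPathSet G {v} := by
  have : Unique (({v} : Finset V) : Set V) := by
    rw [Finset.coe_singleton]
    exact Set.uniqueSingleton v
  exact ⟨1, ⟨Equiv.ofUnique _ _, fun {a b} => by simp [Subsingleton.elim a b]⟩⟩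

end PathSet

section Cover

variable {V : Type*} {F G H : SimpleGraph V} {P : Finset (Finset V)} {u v : V}

/-- `P` is a partition of the vertices of `G` into induced paths (the empty set may be a part);
`pathCoverNumber G` is the least number of parts. -/
def IsPathCover [Fintype V] [DecidableEq V] (G : SimpleGraph V) (P : Finset (Finset V)) : Prop :=
  (∀ s ∈ P, IsPathSet G s) ∧ ∀ v : V, ∃! s, s ∈ P ∧ v ∈ s

lemma pathCoverNumber_le_card [Fintype V] [DecidableEq V] (hP : IsPathCover G P) :
    pathCoverNumber G ≤ P.card :=
  Nat.sInf_le ⟨P, rfl, hP⟩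

/-- The spanning subgraph of `G` formed by the edges inside the members of `P`. -/
def coverGraph (G : SimpleGraph V) (P : Finset (Finset V)) : SimpleGraph V where
  Adj u v := G.Adj u v ∧ ∃ s ∈ P, u ∈ s ∧ v ∈ s
  symm := ⟨fun _ _ ⟨h, s, hs, hu, hv⟩ => ⟨h.symm, s, hs, hv, hu⟩⟩
  loopless := ⟨fun _ h => h.1.ne rfl⟩

lemma coverGraph_le (G : SimpleGraph V) (P : Finset (Finset V)) : coverGraph G P ≤ G :=
  fun _ _ h => h.1

variable [Fintype V] [DecidableEq V]

lemma ncard_neighborSet_coverGraph_le_two (hP : IsPathCover G P) (v : V) :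
    ((coverGraph G P).neighborSet v).ncard ≤ 2 := by
  obtain ⟨s, ⟨hsP, hvs⟩, huniq⟩ := hP.2 v
  refine (Set.ncard_le_ncard ?_ (Set.toFinite _)).trans
    (ncard_neighborSet_inter_le_two (hP.1 s hsP) hvs)
  rintro w ⟨hvw, t, htP, hvt, hwt⟩
  exact ⟨hvw, huniq t ⟨htP, hvt⟩ ▸ hwt⟩

lemma reachable_coverGraph {s : Finset V} (hs : IsPathSet G s) (hsP : s ∈ P) (hu : u ∈ s)
    (hv : v ∈ s) : (coverGraph G P).Reachable u v := by
  obtain ⟨m, ⟨e⟩⟩ := hs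
  let inclusion : G.induce (s : Set V) →g coverGraph G P :=
    ⟨Subtype.val, fun {a b} h => ⟨h, s, hsP, a.2, b.2⟩⟩
  exact ((e.preconnected_iff.2 (pathGraph_preconnected m)) ⟨u, hu⟩ ⟨v, hv⟩).map inclusion

lemma card_connectedComponent_coverGraph_le (hP : IsPathCover G P) :
    Nat.card (coverGraph G P).ConnectedComponent ≤ P.card := by
  choose part hpart using fun v => (hP.2 v).exists
  have hinj : Function.Injective fun c : (coverGraph G P).ConnectedComponent =>
      (⟨part c.out, (hpart c.out).1⟩ : P) := by
    intro c d hcd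
    have hd : c.out ∈ part d.out := Subtype.mk.inj hcd ▸ (hpart c.out).2
    have hreach := reachable_coverGraph (hP.1 _ (hpart d.out).1) (hpart d.out).1 hd
      (hpart d.out).2
    rw [← c.out_eq, ← d.out_eq]
    exact ConnectedComponent.sound hreach
  simpa using Nat.card_le_card_of_injective _ hinj

lemma exists_isPathCover_card_le_card_connectedComponent (hF : F.IsAcyclic) (hHF : H ≤ F)
    (hdeg : ∀ v, (H.neighborSet v).ncard ≤ 2) :
    ∃ P, IsPathCover F P ∧ P.card ≤ Nat.card H.ConnectedComponent := by
  classical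
  have hpath (c : H.ConnectedComponent) : IsPathSet F c.supp.toFinset := by
    rw [IsPathSet, Set.coe_toFinset, induce_supp_eq_induce_supp hF hHF c]
    refine nonempty_iso_pathGraph ((hF.anti hHF).isTree_connectedComponent c) fun v => ?_
    rw [← Set.ncard_image_of_injective _ Subtype.val_injective,
      ← neighborSet_inter_eq_image_induce]
    exact (Set.ncard_inter_le_ncard_left _ _ (Set.toFinite _)).trans (hdeg v)
  refine ⟨Finset.univ.image fun c : H.ConnectedComponent => c.supp.toFinset, ⟨?_, fun v => ?_⟩, ?_⟩
  · simpa using hpath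
  · refine ⟨(H.connectedComponentMk v).supp.toFinset, by simp, ?_⟩
    rintro _ ⟨hs, hv⟩
    obtain ⟨c, -, rfl⟩ := Finset.mem_image.1 hs
    simp_all
  · simpa [Nat.card_eq_fintype_card] using Finset.card_image_le (s := Finset.univ)
      (f := fun c : H.ConnectedComponent => c.supp.toFinset)

lemma exists_isPathCover_card_eq_pathCoverNumber (G : SimpleGraph V) :
    ∃ P, IsPathCover G P ∧ P.card = pathCoverNumber G := by
  have hsingletons : IsPathCover G (Finset.univ.image singleton) := by
    refine ⟨by simpa using isPathSet_singleton G, fun v => ⟨{v}, by simp, ?_⟩⟩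
    rintro _ ⟨hs, hv⟩
    obtain ⟨w, -, rfl⟩ := Finset.mem_image.1 hs
    rw [Finset.mem_singleton.1 hv]
  obtain ⟨P, hcard, hP⟩ := Nat.sInf_mem
    (s := {p | ∃ P : Finset (Finset V), P.card = p ∧ IsPathCover G P}) ⟨_, _, rfl, hsingletons⟩
  exact ⟨P, hP, hcard⟩

end Cover

section MinMax

lemma card_connectedComponent_induce_compl_add_coverCost {V : Type*} [Finite V]
    {F : SimpleGraph V} (hF : F.IsAcyclic) (S : Finset V) :
    Nat.card (F.induce (S : Set V)ᶜ).ConnectedComponent + coverCost F (fun _ => 2) S =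
      Nat.card V + S.card := by
  have hforest := card_connectedComponent_add_ncard_edgeSet (hF.induce (S : Set V)ᶜ)
  rw [ncard_edgeSet_induce, Nat.card_coe_set_eq] at hforest
  have hcompl := Set.ncard_add_ncard_compl (S : Set V)
  rw [Set.ncard_coe_finset] at hcompl
  rw [coverCost, Finset.sum_const, smul_eq_mul]
  omega

variable {V : Type*} [Fintype V] [DecidableEq V] {F : SimpleGraph V}

theorem card_connectedComponent_induce_compl_le (hF : F.IsAcyclic) (S : Finset V) :
    Nat.card (F.induce (S : Set V)ᶜ).ConnectedComponent ≤ pathCoverNumber F + S.card := by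
  obtain ⟨P, hP, hcard⟩ := exists_isPathCover_card_eq_pathCoverNumber F
  have hcomponents := card_connectedComponent_coverGraph_le hP
  have hedges := ncard_edgeSet_le_coverCost (b := fun _ => 2) (coverGraph_le F P)
    (ncard_neighborSet_coverGraph_le_two hP) S
  have heuler := card_connectedComponent_add_ncard_edgeSet (hF.anti (coverGraph_le F P))
  have hcost := card_connectedComponent_induce_compl_add_coverCost hF S
  omega

theorem exists_card_connectedComponent_induce_compl_eq (hF : F.IsAcyclic) :
    ∃ S : Finset V,
      Nat.card (F.induce (S : Set V)ᶜ).ConnectedComponent = pathCoverNumber F + S.card := by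
  obtain ⟨H, hHF, hdeg, S, hS⟩ := exists_coverCost_le_ncard_edgeSet hF fun _ => 2
  obtain ⟨P, hP, hcard⟩ := exists_isPathCover_card_le_card_connectedComponent hF hHF hdeg
  have hcover := pathCoverNumber_le_card hP
  have heuler := card_connectedComponent_add_ncard_edgeSet (hF.anti hHF)
  have hcost := card_connectedComponent_induce_compl_add_coverCost hF S
  exact ⟨S, (card_connectedComponent_induce_compl_le hF S).antisymm (by omega)⟩

end MinMax

section MaximalDisconnection

variable {n : ℕ} {F G : SimpleGraph (Fin n)}

lemma ncard_ETset_add_ncard (G : SimpleGraph (Fin n)) (S : Finset (Fin n)) :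
    (ETset G S).ncard + (G.edgeSet ∩ (S : Set (Fin n))ᶜ.sym2).ncard = G.edgeSet.ncard := by
  have hdiff : ETset G S = G.edgeSet \ (S : Set (Fin n))ᶜ.sym2 := by
    ext e
    simp [ETset, Set.mem_sym2_iff_subset, Set.not_subset, and_comm]
  rw [hdiff, add_comm, Set.ncard_inter_add_ncard_sdiff_eq_ncard _ _ (Set.toFinite _)]

lemma fT_add_card_connectedComponent (hF : F.IsAcyclic) (S : Finset (Fin n)) :
    fT F S + (Nat.card F.ConnectedComponent - 1) =
      Nat.card (F.induce (S : Set (Fin n))ᶜ).ConnectedComponent - S.card := by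
  have hcost := card_connectedComponent_induce_compl_add_coverCost hF S
  have heuler := card_connectedComponent_add_ncard_edgeSet hF
  have hedges := ncard_ETset_add_ncard F S
  rw [coverCost, Finset.sum_const, smul_eq_mul] at hcost
  rw [fT]
  omega

lemma card_connectedComponent_induce_compl_le_MD (G : SimpleGraph (Fin n)) (S : Finset (Fin n)) :
    Nat.card (G.induce (S : Set (Fin n))ᶜ).ConnectedComponent ≤ MD G S.card := by
  have hmem : Sᶜ ∈ Finset.univ.filter fun s : Finset (Fin n) => s.card = n - S.card := by
    simp [Finset.card_compl]
  rw [← Finset.coe_compl]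
  exact Finset.le_sup
    (f := fun s : Finset (Fin n) => Nat.card (G.induce (s : Set _)).ConnectedComponent) hmem

lemma exists_card_eq_MD_eq (G : SimpleGraph (Fin n)) {k : ℕ} (hk : k ≤ n) :
    ∃ S : Finset (Fin n), S.card = k ∧
      MD G k = Nat.card (G.induce (S : Set (Fin n))ᶜ).ConnectedComponent := by
  obtain ⟨t, -, ht⟩ := Finset.exists_subset_card_eq (s := (Finset.univ : Finset (Fin n)))
    (n := n - k) (by simp)
  obtain ⟨s, hs, hmax⟩ := Finset.exists_mem_eq_sup
    (Finset.univ.filter fun s : Finset (Fin n) => s.card = n - k) ⟨t, by simpa using ht⟩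
    fun s => Nat.card (G.induce (s : Set _)).ConnectedComponent
  refine ⟨sᶜ, ?_, ?_⟩
  · rw [Finset.card_compl, (Finset.mem_filter.1 hs).2, Fintype.card_fin]
    omega
  · rw [Finset.coe_compl, compl_compl]
    exact hmax

end MaximalDisconnection

end PathCover

theorem stmt11_general {n : ℕ} (F : SimpleGraph (Fin n)) (hF : F.IsAcyclic) :
    (∀ S : Finset (Fin n),
        fT F S + (Nat.card F.ConnectedComponent - 1) ≤ (pathCoverNumber F : ℤ)) ∧
      (∃ S : Finset (Fin n),
        fT F S + (Nat.card F.ConnectedComponent - 1) = (pathCoverNumber F : ℤ)) ∧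
      (∀ k : ℕ, k ≤ n → (MD F k : ℤ) - k ≤ (pathCoverNumber F : ℤ)) ∧
      (∃ k : ℕ, k ≤ n ∧ (MD F k : ℤ) - k = (pathCoverNumber F : ℤ)) := by
  have hle := PathCover.card_connectedComponent_induce_compl_le hF
  obtain ⟨S, hS⟩ := PathCover.exists_card_connectedComponent_induce_compl_eq hF
  have hMD : ∀ k ≤ n, (MD F k : ℤ) - k ≤ pathCoverNumber F := by
    intro k hk
    obtain ⟨R, rfl, hR⟩ := PathCover.exists_card_eq_MD_eq F hk
    have := hle R
    omega
  have hScard : S.card ≤ n := by simpa using S.card_le_univ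
  refine ⟨fun R => ?_, ⟨S, ?_⟩, hMD, S.card, hScard, (hMD _ hScard).antisymm ?_⟩
  · rw [PathCover.fT_add_card_connectedComponent hF]
    have := hle R
    omega
  · rw [PathCover.fT_add_card_connectedComponent hF]
    omega
  · have := PathCover.card_connectedComponent_induce_compl_le_MD F S
    omega

/-- For a tree T, P(T) = max over S of f_T(S), and this also equals
max over 0 ≤ k ≤ n of (M_k(T) − k). -/
theorem stmt11 {n : ℕ} (T : SimpleGraph (Fin n)) (hT : T.IsTree) :
    (∀ S : Finset (Fin n), fT T S ≤ (pathCoverNumber T : ℤ)) ∧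
      (∃ S : Finset (Fin n), fT T S = (pathCoverNumber T : ℤ)) ∧
      (∀ k : ℕ, k ≤ n → (MD T k : ℤ) - k ≤ (pathCoverNumber T : ℤ)) ∧
      (∃ k : ℕ, k ≤ n ∧ (MD T k : ℤ) - k = (pathCoverNumber T : ℤ)) := by
  have hcard : Nat.card T.ConnectedComponent = 1 :=
    Nat.card_eq_one_iff_unique.2 ⟨hT.connected.preconnected.subsingleton_connectedComponent,
      hT.connected.nonempty.map T.connectedComponentMk⟩
  simpa only [hcard, Nat.cast_one, sub_self, add_zero] using stmt11_general T hT.isAcyclic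
end

section
/- Let G be a graph with a pendant vertex v whose deletion leaves G − v. If (i,j) is the partial inertia of some matrix in S(G − v), then both (i+1, j) and (i, j+1) are partial inertias of matrices in S(G). -/
open Matrix

/-! If `B ∈ S(G - v)` and `e` is the indicator vector of the neighbours of `v`, the quadratic
form `c (x_v + eᵀy)² + yᵀBy`, with `y` the restriction of `x` to `G - v`, has as its matrix a
bordering of `B + c eeᵀ`. In suitable coordinates the form is the orthogonal sum of `c t²` and
the form of `B`, so by Sylvester's law of inertia exactly one eigenvalue is added, with the
sign of `c`. Off the diagonal, `B + c eeᵀ` differs from `B` only at pairs of distinct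
neighbours of `v`. A pendant vertex has no such pairs; more generally, when the neighbours of
`v` are pairwise adjacent, the entries of `B` there are nonzero, and they stay nonzero for
small `c`. -/

open Filter Topology

section Signature

theorem weightedSumSquares_prod_equivalent_sumElim {R ι κ : Type*} [CommSemiring R]
    [Fintype ι] [Fintype κ] (w : ι → R) (w' : κ → R) :
    ((QuadraticMap.weightedSumSquares R w).prod (QuadraticMap.weightedSumSquares R w')).Equivalent
      (QuadraticMap.weightedSumSquares R (Sum.elim w w')) :=
  ⟨{ (LinearEquiv.sumArrowLequivProdArrow ι κ R R).symm with
    map_app' := fun x ↦ by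
      simp [QuadraticMap.weightedSumSquares_apply, LinearEquiv.sumArrowLequivProdArrow,
        Equiv.sumArrowEquivProdArrow] }⟩

theorem ncard_setOf_sum {α β : Type*} [Finite α] [Finite β] (p : α ⊕ β → Prop) :
    {x | p x}.ncard = {a | p (.inl a)}.ncard + {b | p (.inr b)}.ncard :=
  (Nat.card_congr Equiv.subtypeSum).trans Nat.card_sum

variable {𝕜 M M' : Type*} [Field 𝕜] [LinearOrder 𝕜] [IsStrictOrderedRing 𝕜]
  [AddCommGroup M] [Module 𝕜 M] [FiniteDimensional 𝕜 M]
  [AddCommGroup M'] [Module 𝕜 M'] [FiniteDimensional 𝕜 M']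

theorem sigPos_prod (Q : QuadraticForm 𝕜 M) (Q' : QuadraticForm 𝕜 M') :
    sigPos (Q.prod Q') = sigPos Q + sigPos Q' := by
  have : Invertible (2 : 𝕜) := invertibleOfNonzero two_ne_zero
  obtain ⟨w, hw⟩ := Q.equivalent_weightedSumSquares
  obtain ⟨w', hw'⟩ := Q'.equivalent_weightedSumSquares
  have hprod := (hw.prod hw').trans (weightedSumSquares_prod_equivalent_sumElim w w')
  rw [QuadraticForm.sigPos_of_equiv_weightedSumSquares hprod,
    QuadraticForm.sigPos_of_equiv_weightedSumSquares hw,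
    QuadraticForm.sigPos_of_equiv_weightedSumSquares hw', ncard_setOf_sum]
  simp only [Sum.elim_inl, Sum.elim_inr]

theorem sigNeg_prod (Q : QuadraticForm 𝕜 M) (Q' : QuadraticForm 𝕜 M') :
    sigNeg (Q.prod Q') = sigNeg Q + sigNeg Q' := by
  have hneg : -(Q.prod Q') = (-Q).prod (-Q') := by
    ext x
    simp [add_comm]
  rw [← sigPos_neg, hneg, sigPos_prod, sigPos_neg, sigPos_neg]

end Signature

section Inertia

theorem toQuadraticForm'_apply {ι R : Type*} [Fintype ι] [DecidableEq ι] [CommRing R]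
    (A : Matrix ι ι R) (x : ι → R) : A.toQuadraticForm' x = x ⬝ᵥ A *ᵥ x := by
  simp [toQuadraticForm', toLinearMap₂'_apply']

theorem toQuadraticForm'_equivalent_eigenvalues {ι : Type*} [Fintype ι] [DecidableEq ι]
    {A : Matrix ι ι ℝ} (hA : A.IsHermitian) :
    A.toQuadraticForm'.Equivalent (QuadraticMap.weightedSumSquares ℝ hA.eigenvalues) := by
  let U : Matrix ι ι ℝ := hA.eigenvectorUnitary.1
  have hU : U * Uᵀ = 1 := Unitary.coe_mul_star_self hA.eigenvectorUnitary
  have hU' : Uᵀ * U = 1 := Unitary.coe_star_mul_self hA.eigenvectorUnitary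
  have hspec : A = U * diagonal hA.eigenvalues * Uᵀ := hA.spectral_theorem
  refine ⟨{ toLin'OfInv hU hU' with map_app' := fun x ↦ ?_ }⟩
  change QuadraticMap.weightedSumSquares ℝ hA.eigenvalues (Uᵀ *ᵥ x) = A.toQuadraticForm' x
  calc QuadraticMap.weightedSumSquares ℝ hA.eigenvalues (Uᵀ *ᵥ x)
      = (Uᵀ *ᵥ x) ⬝ᵥ (diagonal hA.eigenvalues *ᵥ (Uᵀ *ᵥ x)) := by
        simp only [QuadraticMap.weightedSumSquares_apply, dotProduct, mulVec_diagonal, smul_eq_mul,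
          mul_left_comm]
    _ = x ⬝ᵥ (U * diagonal hA.eigenvalues * Uᵀ) *ᵥ x := by
        rw [← mulVec_mulVec, ← mulVec_mulVec, dotProduct_mulVec x, mulVec_transpose]
    _ = A.toQuadraticForm' x := by rw [← hspec, toQuadraticForm'_apply]

theorem hasInertia_iff_sigPos_sigNeg {m : ℕ} {A : Matrix (Fin m) (Fin m) ℝ} {r s : ℕ} :
    HasInertia A r s ↔
      A.IsHermitian ∧ sigPos A.toQuadraticForm' = r ∧ sigNeg A.toQuadraticForm' = s := by
  rw [HasInertia, ← exists_prop]
  refine exists_congr fun hA ↦ ?_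
  have hequiv := toQuadraticForm'_equivalent_eigenvalues hA
  rw [QuadraticForm.sigPos_of_equiv_weightedSumSquares hequiv,
    QuadraticForm.sigNeg_of_equiv_weightedSumSquares hequiv, posIn, negIn,
    ← Set.ncard_coe_finset, ← Set.ncard_coe_finset, Finset.coe_filter_univ, Finset.coe_filter_univ]

end Inertia

section AdjoinSquare

variable {n : ℕ} {R : Type*} [CommRing R]

/-- The matrix, in coordinates `x` on `Fin (n + 1)`, of the quadratic form
`c (x_v + eᵀy)² + yᵀBy`, where `y` is `x` with its coordinate at `v` removed. It is used to border
`B` by a row and column at position `v` with known effect on the inertia. -/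
def adjoinSquare (v : Fin (n + 1)) (c : R) (e : Fin n → R) (B : Matrix (Fin n) (Fin n) R) :
    Matrix (Fin (n + 1)) (Fin (n + 1)) R :=
  of <| v.insertNth (α := fun _ ↦ Fin (n + 1) → R) (v.insertNth (α := fun _ ↦ R) c (c • e))
    fun i ↦ v.insertNth (α := fun _ ↦ R) (c * e i) (B i + (c * e i) • e)

variable (v : Fin (n + 1)) (c : R) (e : Fin n → R) (B : Matrix (Fin n) (Fin n) R)

@[simp]
theorem adjoinSquare_self_self : adjoinSquare v c e B v v = c := by
  simp [adjoinSquare]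

@[simp]
theorem adjoinSquare_self_succAbove (l : Fin n) :
    adjoinSquare v c e B v (v.succAbove l) = c * e l := by
  simp [adjoinSquare]

@[simp]
theorem adjoinSquare_succAbove_self (i : Fin n) :
    adjoinSquare v c e B (v.succAbove i) v = c * e i := by
  simp [adjoinSquare]

@[simp]
theorem adjoinSquare_succAbove_succAbove (i l : Fin n) :
    adjoinSquare v c e B (v.succAbove i) (v.succAbove l) = B i l + c * e i * e l := by
  simp [adjoinSquare]

variable {B} in
theorem isSymm_adjoinSquare (hB : B.IsSymm) : (adjoinSquare v c e B).IsSymm := by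
  ext a b
  cases a using v.succAboveCases <;> cases b using v.succAboveCases <;>
    simp [hB.apply, mul_right_comm]

theorem toQuadraticForm'_adjoinSquare_apply (x : Fin (n + 1) → R) :
    (adjoinSquare v c e B).toQuadraticForm' x =
      c * (x v + e ⬝ᵥ v.removeNth x) ^ 2 + B.toQuadraticForm' (v.removeNth x) := by
  set y := v.removeNth x with hy
  have hself : (adjoinSquare v c e B *ᵥ x) v = c * (x v + e ⬝ᵥ y) := by
    simp [mulVec, dotProduct, Fin.sum_univ_succAbove _ v, hy, Fin.removeNth_apply, mul_add,
      Finset.mul_sum, mul_assoc]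
  have hrest : v.removeNth (adjoinSquare v c e B *ᵥ x) = B *ᵥ y + (c * (x v + e ⬝ᵥ y)) • e := by
    ext i
    simp only [hy, Fin.removeNth_apply, mulVec, dotProduct, Fin.sum_univ_succAbove _ v,
      adjoinSquare_succAbove_self, adjoinSquare_succAbove_succAbove, Pi.add_apply, Pi.smul_apply,
      smul_eq_mul, add_mul, Finset.sum_add_distrib, mul_assoc, ← Finset.mul_sum]
    ring
  calc (adjoinSquare v c e B).toQuadraticForm' x
      = x v * (adjoinSquare v c e B *ᵥ x) v + y ⬝ᵥ v.removeNth (adjoinSquare v c e B *ᵥ x) := by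
        rw [toQuadraticForm'_apply, dotProduct, Fin.sum_univ_succAbove _ v]
        rfl
    _ = x v * (c * (x v + e ⬝ᵥ y)) + (y ⬝ᵥ B *ᵥ y + c * (x v + e ⬝ᵥ y) * (e ⬝ᵥ y)) := by
        rw [hself, hrest, dotProduct_add, dotProduct_smul, smul_eq_mul, dotProduct_comm y e]
    _ = c * (x v + e ⬝ᵥ y) ^ 2 + B.toQuadraticForm' y := by
        rw [toQuadraticForm'_apply]
        ring

theorem toQuadraticForm'_adjoinSquare_equivalent :
    (adjoinSquare v c e B).toQuadraticForm'.Equivalent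
      ((QuadraticMap.weightedSumSquares R fun _ : Unit ↦ c).prod B.toQuadraticForm') :=
  ⟨{ toFun := fun x ↦ (fun _ ↦ x v + e ⬝ᵥ v.removeNth x, v.removeNth x)
     invFun := fun p ↦ v.insertNth (α := fun _ ↦ R) (p.1 () - e ⬝ᵥ p.2) p.2
     map_add' := fun x y ↦ by
       have hrem : v.removeNth (x + y) = v.removeNth x + v.removeNth y := rfl
       ext <;> simp [hrem, dotProduct_add, add_add_add_comm]
     map_smul' := fun t x ↦ by
       have hrem : v.removeNth (t • x) = t • v.removeNth x := rfl
       ext <;> simp [hrem, mul_add]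
     left_inv := fun x ↦ by simp
     right_inv := fun p ↦ by simp
     map_app' := fun x ↦ by
       simp [toQuadraticForm'_adjoinSquare_apply, QuadraticMap.weightedSumSquares_apply, sq] }⟩

end AdjoinSquare

namespace HasInertia

variable {n : ℕ} {B : Matrix (Fin n) (Fin n) ℝ} {r s : ℕ}

protected theorem adjoinSquare (h : HasInertia B r s) (v : Fin (n + 1)) (c : ℝ) (e : Fin n → ℝ) :
    HasInertia (adjoinSquare v c e B)
      (r + if 0 < c then 1 else 0) (s + if c < 0 then 1 else 0) := by
  obtain ⟨hB, rfl, rfl⟩ := hasInertia_iff_sigPos_sigNeg.1 h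
  have hequiv := toQuadraticForm'_adjoinSquare_equivalent v c e B
  rw [isHermitian_iff_isSymm] at hB
  refine hasInertia_iff_sigPos_sigNeg.2
    ⟨isHermitian_iff_isSymm.2 (isSymm_adjoinSquare v c e hB), ?_, ?_⟩
  · rw [hequiv.sigPos_eq, sigPos_prod, QuadraticForm.sigPos_weightedSumSquares, add_comm]
    split_ifs with hc <;> simp [hc]
  · rw [hequiv.sigNeg_eq, sigNeg_prod, QuadraticForm.sigNeg_weightedSumSquares, add_comm]
    split_ifs with hc <;> simp [hc]

theorem adjoinSquare_of_pos (h : HasInertia B r s) (v : Fin (n + 1)) {c : ℝ} (hc : 0 < c)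
    (e : Fin n → ℝ) : HasInertia (adjoinSquare v c e B) (r + 1) s := by
  simpa [hc, hc.not_gt] using h.adjoinSquare v c e

theorem adjoinSquare_of_neg (h : HasInertia B r s) (v : Fin (n + 1)) {c : ℝ} (hc : c < 0)
    (e : Fin n → ℝ) : HasInertia (adjoinSquare v c e B) r (s + 1) := by
  simpa [hc, hc.not_gt] using h.adjoinSquare v c e

end HasInertia

theorem SMat.adjoinSquare_indicator {n : ℕ} {G : SimpleGraph (Fin (n + 1))} {v : Fin (n + 1)}
    {B : Matrix (Fin n) (Fin n) ℝ} (hv : G.IsClique (G.neighborSet v))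
    (hB : SMat (G.comap v.succAbove) B) {c : ℝ} (hc : c ≠ 0)
    (hBc : ∀ i l, B i l ≠ 0 → B i l + c ≠ 0) :
    SMat G (adjoinSquare v c ((v.succAbove ⁻¹' G.neighborSet v).indicator 1) B) := by
  obtain ⟨hsymm, hadj⟩ := hB
  refine ⟨isSymm_adjoinSquare v c _ hsymm, fun a b hab ↦ ?_⟩
  cases a using v.succAboveCases with
  | x =>
    cases b using v.succAboveCases with
    | x => exact absurd rfl hab
    | p l => simp [hc]
  | p i =>
    cases b using v.succAboveCases with
    | x => simp [hc, G.adj_comm]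
    | p l =>
      have hil : i ≠ l := fun h ↦ hab (congrArg v.succAbove h)
      by_cases h : G.Adj v (v.succAbove i) ∧ G.Adj v (v.succAbove l)
      · have hadj_il : G.Adj (v.succAbove i) (v.succAbove l) := hv h.1 h.2 hab
        simpa [h.1, h.2, hadj_il] using hBc i l ((hadj i l hil).2 hadj_il)
      · have hzero : c * (v.succAbove ⁻¹' G.neighborSet v).indicator 1 i *
            (v.succAbove ⁻¹' G.neighborSet v).indicator 1 l = 0 := by
          simpa [hc, imp_iff_not_or] using not_and_or.1 h
        rw [adjoinSquare_succAbove_succAbove, hzero, add_zero, hadj i l hil, SimpleGraph.comap_adj]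

theorem eventually_forall_ne_zero_imp_add_ne_zero {m n R : Type*} [Finite m] [Finite n]
    [AddZeroClass R] [TopologicalSpace R] [ContinuousAdd R] [T1Space R] (B : Matrix m n R) :
    ∀ᶠ c in 𝓝 (0 : R), ∀ i l, B i l ≠ 0 → B i l + c ≠ 0 := by
  simp only [eventually_all]
  intro i l h
  exact ContinuousAt.eventually_ne (by fun_prop) (by rwa [add_zero])

theorem stmt18_general {n : ℕ} (G : SimpleGraph (Fin (n + 1))) (v : Fin (n + 1))
    (hv : G.IsClique (G.neighborSet v)) (i j : ℕ)
    (h : ∃ B : Matrix (Fin n) (Fin n) ℝ,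
      SMat (G.comap v.succAbove) B ∧ HasInertia B i j) :
    (∃ A : Matrix (Fin (n + 1)) (Fin (n + 1)) ℝ, SMat G A ∧ HasInertia A (i + 1) j) ∧
      ∃ A : Matrix (Fin (n + 1)) (Fin (n + 1)) ℝ, SMat G A ∧ HasInertia A i (j + 1) := by
  obtain ⟨B, hB, hBij⟩ := h
  have hsmall := eventually_forall_ne_zero_imp_add_ne_zero B
  obtain ⟨c, hBc, hc : 0 < c⟩ :=
    ((hsmall.filter_mono nhdsWithin_le_nhds).and (self_mem_nhdsWithin (s := Set.Ioi 0))).exists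
  obtain ⟨d, hBd, hd : d < 0⟩ :=
    ((hsmall.filter_mono nhdsWithin_le_nhds).and (self_mem_nhdsWithin (s := Set.Iio 0))).exists
  exact ⟨⟨_, hB.adjoinSquare_indicator hv hc.ne' hBc, hBij.adjoinSquare_of_pos v hc _⟩,
    ⟨_, hB.adjoinSquare_indicator hv hd.ne hBd, hBij.adjoinSquare_of_neg v hd _⟩⟩

/-- If v is a pendant vertex of G and (i,j) is attained in S(G − v), then both
(i+1, j) and (i, j+1) are attained in S(G). -/
theorem stmt18 {n : ℕ} (G : SimpleGraph (Fin (n + 1))) (v : Fin (n + 1))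
    (hpend : ∃! w : Fin (n + 1), G.Adj v w) (i j : ℕ)
    (h : ∃ B : Matrix (Fin n) (Fin n) ℝ,
      SMat (G.comap v.succAbove) B ∧ HasInertia B i j) :
    (∃ A : Matrix (Fin (n + 1)) (Fin (n + 1)) ℝ, SMat G A ∧ HasInertia A (i + 1) j) ∧
      ∃ A : Matrix (Fin (n + 1)) (Fin (n + 1)) ℝ, SMat G A ∧ HasInertia A i (j + 1) := by
  exact stmt18_general G v (.of_subsingleton fun _ ha _ hb ↦ hpend.unique ha hb) i j h
end

section
/- Let G be a graph and M ∈ S(G) a real symmetric positive semidefinite matrix of rank k > 1, i.e. with partial inertia (k,0). Then there exists a real symmetric matrix M′ ∈ S(G) whose partial inertia (r,s) satisfies r < k and s < k. Consequently, for k > 1 the square partition (k,k,…,k) of height k is never the inertial partition of a graph. -/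
/-!
Write `M` as the Gram matrix of vectors `a i` spanning a Euclidean space `V` of dimension `k`, and
for `w z : V` with `‖w‖ = ‖z‖ ≠ 0` multiply the entry `⟪a i, a j⟫` by
`⟪a i, w⟫ * ⟪a j, w⟫ - ⟪a i, z⟫ * ⟪a j, z⟫`. The quadratic form of the resulting matrix is
`‖u‖ ^ 2 - ‖v‖ ^ 2`, where `u = ∑ x i * ⟪a i, w⟫ • a i` and `v = ∑ x i * ⟪a i, z⟫ • a i` satisfy
`⟪z, u⟫ = ⟪w, v⟫`. By this relation and `‖w‖ = ‖z‖`, the form does not change when a multiple of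
`(z, w)` is added to `(u, v)`, so it is nonpositive as soon as `u` vanishes in `V ⧸ ℝ ∙ z`. Hence it
has at most `k - 1` positive, and by symmetry at most `k - 1` negative, eigenvalues. As `1 < k`, for
generic `w` and `z` no nonzero `⟪a i, a j⟫` is multiplied by zero.
-/

open Matrix

open Module Submodule
open scoped RealInnerProductSpace

section Inertia

variable {K V E ι : Type*} [Field K] [LinearOrder K] [IsStrictOrderedRing K]
  [AddCommGroup V] [Module K V] [AddCommGroup E] [Module K E] [FiniteDimensional K E] [Fintype ι]

lemma card_pos_le_finrank_of_sum_mul_sq_nonpos (b : Basis ι K V) (c : ι → K) (L : V →ₗ[K] E)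
    (hL : ∀ x, L x = 0 → ∑ i, c i * b.repr x i ^ 2 ≤ 0) :
    (Finset.univ.filter fun i => 0 < c i).card ≤ finrank K E := by
  have := b.finiteDimensional_of_finite
  let Φ : V →ₗ[K] E × ({i // ¬ 0 < c i} → K) := L.prod (LinearMap.pi fun i => b.coord i)
  have hΦ : Function.Injective Φ := by
    refine (injective_iff_map_eq_zero Φ).2 fun x hx => ?_
    obtain ⟨hLx, hcoord⟩ := Prod.ext_iff.1 hx
    have hcoord_zero (i : ι) (hi : ¬ 0 < c i) : b.repr x i = 0 := congrFun hcoord ⟨i, hi⟩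
    have hterm (i : ι) : 0 ≤ c i * b.repr x i ^ 2 := by
      by_cases hi : 0 < c i
      · positivity
      · simp [hcoord_zero i hi]
    have hsum : ∑ i, c i * b.repr x i ^ 2 = 0 :=
      (hL x hLx).antisymm (Finset.sum_nonneg fun i _ => hterm i)
    refine b.ext_elem fun i => ?_
    rw [map_zero, Finsupp.zero_apply]
    by_cases hi : 0 < c i
    · simpa [hi.ne'] using (Finset.sum_eq_zero_iff_of_nonneg fun i _ => hterm i).1 hsum i
    · exact hcoord_zero i hi
  have hdim := LinearMap.finrank_le_finrank_of_injective hΦ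
  rw [finrank_prod, finrank_fintype_fun_eq_card, finrank_eq_card_basis b,
    Fintype.card_subtype_compl, Fintype.card_subtype] at hdim
  have := Finset.card_le_univ (Finset.univ.filter fun i => 0 < c i)
  omega

end Inertia

section QuadraticForm

lemma dotProduct_mulVec_eq_sum_eigenvalues {n : Type*} [Fintype n] [DecidableEq n]
    {A : Matrix n n ℝ} (hA : A.IsHermitian) (x : EuclideanSpace ℝ n) :
    x.ofLp ⬝ᵥ (A *ᵥ x.ofLp) =
      ∑ i, hA.eigenvalues i * hA.eigenvectorBasis.toBasis.repr x i ^ 2 := by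
  have hsymm : A.toEuclideanLin.IsSymmetric := isSymmetric_toEuclideanLin_iff.2 hA
  have heigen (i : n) : A.toEuclideanLin (hA.eigenvectorBasis i) =
      hA.eigenvalues i • hA.eigenvectorBasis i :=
    congrArg (WithLp.toLp 2) (hA.mulVec_eigenvectorBasis i)
  calc x.ofLp ⬝ᵥ (A *ᵥ x.ofLp) = ⟪x, A.toEuclideanLin x⟫ := by
        rw [EuclideanSpace.inner_eq_star_dotProduct, star_trivial, dotProduct_comm]; rfl
    _ = ∑ i, ⟪x, hA.eigenvectorBasis i⟫ * ⟪hA.eigenvectorBasis i, A.toEuclideanLin x⟫ :=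
        (hA.eigenvectorBasis.sum_inner_mul_inner _ _).symm
    _ = _ := by
        refine Finset.sum_congr rfl fun i _ => ?_
        rw [← hsymm, heigen, real_inner_smul_left, real_inner_comm,
          OrthonormalBasis.coe_toBasis_repr_apply, OrthonormalBasis.repr_apply_apply]
        ring

variable {m : ℕ} {A : Matrix (Fin m) (Fin m) ℝ} {E : Type*} [AddCommGroup E] [Module ℝ E]
  [FiniteDimensional ℝ E]

lemma posIn_le_finrank (hA : A.IsHermitian) (L : (Fin m → ℝ) →ₗ[ℝ] E)
    (hL : ∀ x, L x = 0 → x ⬝ᵥ (A *ᵥ x) ≤ 0) : posIn hA ≤ finrank ℝ E := by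
  refine card_pos_le_finrank_of_sum_mul_sq_nonpos hA.eigenvectorBasis.toBasis hA.eigenvalues
    (L ∘ₗ (WithLp.linearEquiv 2 ℝ (Fin m → ℝ)).toLinearMap) fun x hx => ?_
  rw [← dotProduct_mulVec_eq_sum_eigenvalues]
  exact hL x.ofLp hx

lemma negIn_le_finrank (hA : A.IsHermitian) (L : (Fin m → ℝ) →ₗ[ℝ] E)
    (hL : ∀ x, L x = 0 → 0 ≤ x ⬝ᵥ (A *ᵥ x)) : negIn hA ≤ finrank ℝ E := by
  simp only [negIn, ← neg_pos (a := hA.eigenvalues _)]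
  refine card_pos_le_finrank_of_sum_mul_sq_nonpos hA.eigenvectorBasis.toBasis
    (fun i => -hA.eigenvalues i)
    (L ∘ₗ (WithLp.linearEquiv 2 ℝ (Fin m → ℝ)).toLinearMap) fun x hx => ?_
  simp only [neg_mul, Finset.sum_neg_distrib]
  rw [← dotProduct_mulVec_eq_sum_eigenvalues, neg_nonpos]
  exact hL x.ofLp hx

end QuadraticForm

section Gram

lemma gram_mulVec_apply {n 𝕜 E : Type*} [RCLike 𝕜] [SeminormedAddCommGroup E]
    [InnerProductSpace 𝕜 E] [Fintype n] (v : n → E) (x : n → 𝕜) (i : n) :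
    (gram 𝕜 v *ᵥ x) i = inner 𝕜 (v i) (∑ j, x j • v j) := by
  simp only [mulVec, dotProduct, gram_apply, inner_sum, inner_smul_right, mul_comm]

lemma rank_gram {n 𝕜 E : Type*} [RCLike 𝕜] [NormedAddCommGroup E] [InnerProductSpace 𝕜 E]
    [Fintype n] (v : n → E) : (gram 𝕜 v).rank = finrank 𝕜 (span 𝕜 (Set.range v)) := by
  have hker : LinearMap.ker (gram 𝕜 v).mulVecLin =
      LinearMap.ker (Fintype.linearCombination 𝕜 v) := by
    ext x
    rw [LinearMap.mem_ker, LinearMap.mem_ker, mulVecLin_apply, Fintype.linearCombination_apply]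
    constructor
    · intro hx
      rw [← inner_self_eq_zero (𝕜 := 𝕜), ← star_dotProduct_gram_mulVec, hx, dotProduct_zero]
    · intro hx
      ext i
      rw [gram_mulVec_apply, hx, inner_zero_right, Pi.zero_apply]
  have hgram := (gram 𝕜 v).mulVecLin.finrank_range_add_finrank_ker
  have hcomb := (Fintype.linearCombination 𝕜 v).finrank_range_add_finrank_ker
  rw [Fintype.range_linearCombination, ← hker, ← hgram] at hcomb
  exact (Nat.add_right_cancel hcomb).symm

open scoped ComplexOrder MatrixOrder Matrix.Norms.L2Operator in
lemma exists_gram_eq_of_posSemidef {n 𝕜 : Type*} [RCLike 𝕜] [Fintype n] {M : Matrix n n 𝕜}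
    (hM : M.PosSemidef) :
    ∃ (V : Submodule 𝕜 (EuclideanSpace 𝕜 n)) (a : n → V), gram 𝕜 a = M ∧ finrank 𝕜 V = M.rank := by
  classical
  obtain ⟨B, rfl⟩ := CStarAlgebra.nonneg_iff_eq_star_mul_self.mp hM.nonneg
  let b : n → EuclideanSpace 𝕜 n := fun j => WithLp.toLp 2 (B.col j)
  have hb : gram 𝕜 b = star B * B := by
    ext i j
    rw [gram_apply, EuclideanSpace.inner_eq_star_dotProduct, dotProduct_comm]
    rfl
  refine ⟨span 𝕜 (Set.range b), fun i => ⟨b i, subset_span ⟨i, rfl⟩⟩, hb, ?_⟩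
  rw [← hb, rank_gram]

end Gram

section Twist

variable {V n : Type*} [NormedAddCommGroup V] [InnerProductSpace ℝ V]

/-- The family obtained from `a` by scaling each vector by its inner product with `w`; its
Gram matrix is that of `a` with row and column `i` multiplied by `⟪a i, w⟫`. -/
def innerScaled (a : n → V) (w : V) (i : n) : V := ⟪a i, w⟫ • a i

/-- The twist by `w` and `z` of the Gram matrix of `a`: the matrix with the small inertia, whose
entries are given by `gramTwist_apply`. It is defined as a difference of Gram matrices, so that its
quadratic form is a difference of squared norms. -/
def gramTwist (a : n → V) (w z : V) : Matrix n n ℝ :=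
  gram ℝ (innerScaled a w) - gram ℝ (innerScaled a z)

lemma gramTwist_apply (a : n → V) (w z : V) (i j : n) :
    gramTwist a w z i j = ⟪a i, a j⟫ * (⟪a i, w⟫ * ⟪a j, w⟫ - ⟪a i, z⟫ * ⟪a j, z⟫) := by
  simp only [gramTwist, innerScaled, Matrix.sub_apply, gram_apply, real_inner_smul_left,
    real_inner_smul_right]
  ring

lemma isHermitian_gramTwist (a : n → V) (w z : V) : (gramTwist a w z).IsHermitian :=
  (isHermitian_gram ℝ _).sub (isHermitian_gram ℝ _)

variable {w z : V}

lemma norm_add_smul_sq_sub_norm_add_smul_sq {u v : V} (hwz : ‖w‖ = ‖z‖) (huv : ⟪u, z⟫ = ⟪v, w⟫)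
    (t : ℝ) : ‖u + t • z‖ ^ 2 - ‖v + t • w‖ ^ 2 = ‖u‖ ^ 2 - ‖v‖ ^ 2 := by
  rw [norm_add_sq_real, norm_add_sq_real, real_inner_smul_right, real_inner_smul_right, norm_smul,
    norm_smul, hwz, huv]
  ring

variable [Fintype n] (a : n → V)

lemma inner_sum_smul_innerScaled_comm (w z : V) (x : n → ℝ) :
    ⟪∑ i, x i • innerScaled a w i, z⟫ = ⟪∑ i, x i • innerScaled a z i, w⟫ := by
  simp only [innerScaled, sum_inner, real_inner_smul_left]
  exact Finset.sum_congr rfl fun i _ => by ring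

lemma dotProduct_gramTwist_mulVec (w z : V) (x : n → ℝ) :
    x ⬝ᵥ (gramTwist a w z *ᵥ x) =
      ‖∑ i, x i • innerScaled a w i‖ ^ 2 - ‖∑ i, x i • innerScaled a z i‖ ^ 2 := by
  have hgram (v : n → V) : x ⬝ᵥ (gram ℝ v *ᵥ x) = ‖∑ i, x i • v i‖ ^ 2 := by
    rw [← real_inner_self_eq_norm_sq, ← star_dotProduct_gram_mulVec, star_trivial]
  rw [gramTwist, sub_mulVec, dotProduct_sub, hgram, hgram]

lemma dotProduct_gramTwist_mulVec_nonpos (hwz : ‖w‖ = ‖z‖) {x : n → ℝ}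
    (hx : ∑ i, x i • innerScaled a w i ∈ ℝ ∙ z) : x ⬝ᵥ (gramTwist a w z *ᵥ x) ≤ 0 := by
  obtain ⟨t, ht⟩ := mem_span_singleton.1 hx
  rw [dotProduct_gramTwist_mulVec, ← norm_add_smul_sq_sub_norm_add_smul_sq hwz
    (inner_sum_smul_innerScaled_comm a w z x) (-t), ← ht, neg_smul, add_neg_cancel, norm_zero,
    zero_pow two_ne_zero, zero_sub, neg_nonpos]
  exact sq_nonneg _

end Twist

section TwistInertia

lemma finrank_quotient_span_singleton_lt {K V : Type*} [DivisionRing K] [AddCommGroup V]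
    [Module K V] [FiniteDimensional K V] {z : V} (hz : z ≠ 0) :
    finrank K (V ⧸ K ∙ z) < finrank K V := by
  rw [← finrank_quotient_add_finrank (K ∙ z), finrank_span_singleton hz]
  exact Nat.lt_succ_self _

variable {V : Type*} [NormedAddCommGroup V] [InnerProductSpace ℝ V] [FiniteDimensional ℝ V]
  {w z : V} {m : ℕ} (a : Fin m → V)

lemma posIn_gramTwist_lt (hwz : ‖w‖ = ‖z‖) (hz : z ≠ 0) :
    posIn (isHermitian_gramTwist a w z) < finrank ℝ V := by
  refine (posIn_le_finrank _ ((ℝ ∙ z).mkQ ∘ₗ Fintype.linearCombination ℝ (innerScaled a w))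
    fun x hx => ?_).trans_lt (finrank_quotient_span_singleton_lt hz)
  exact dotProduct_gramTwist_mulVec_nonpos a hwz ((Quotient.mk_eq_zero _).1 hx)

lemma negIn_gramTwist_lt (hwz : ‖w‖ = ‖z‖) (hw : w ≠ 0) :
    negIn (isHermitian_gramTwist a w z) < finrank ℝ V := by
  refine (negIn_le_finrank _ ((ℝ ∙ w).mkQ ∘ₗ Fintype.linearCombination ℝ (innerScaled a z))
    fun x hx => ?_).trans_lt (finrank_quotient_span_singleton_lt hw)
  have hnonpos := dotProduct_gramTwist_mulVec_nonpos a hwz.symm ((Quotient.mk_eq_zero _).1 hx)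
  rw [dotProduct_gramTwist_mulVec] at hnonpos ⊢
  linarith

end TwistInertia

section Generic

lemma dense_setOf_ne_of_analyticOnNhd {𝕜 E F : Type*} [NontriviallyNormedField 𝕜]
    [NormedAddCommGroup E] [NormedSpace 𝕜 E] [PreconnectedSpace E] [NormedAddCommGroup F]
    [NormedSpace 𝕜 F] {f g : E → F}
    (hf : AnalyticOnNhd 𝕜 f Set.univ) (hg : AnalyticOnNhd 𝕜 g Set.univ) (hne : f ≠ g) :
    Dense {x | f x ≠ g x} := by
  refine interior_eq_empty_iff_dense_compl.1 (Set.eq_empty_iff_forall_notMem.2 fun x hx => ?_)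
  exact hne (hf.eq_of_eventuallyEq hg (mem_interior_iff_mem_nhds.1 hx))

variable {V : Type*} [NormedAddCommGroup V] [InnerProductSpace ℝ V]

lemma exists_ne_zero_inner_eq_zero (hV : 1 < finrank ℝ V) (a : V) : ∃ x ≠ 0, ⟪a, x⟫ = 0 := by
  have := finite_of_finrank_pos (zero_lt_one.trans hV)
  have hker : LinearMap.ker (innerₛₗ ℝ a) ≠ ⊥ :=
    LinearMap.ker_ne_bot_of_finrank_lt (by rwa [finrank_self])
  obtain ⟨x, hx, hx0⟩ := exists_mem_ne_zero_of_ne_bot hker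
  exact ⟨x, hx0, hx⟩

lemma dense_setOf_norm_sq_mul_inner_mul_inner_ne (hV : 1 < finrank ℝ V) {a b : V}
    (hab : ⟪a, b⟫ ≠ 0) :
    Dense {p : V × V | ‖p.2‖ ^ 2 * (⟪a, p.1⟫ * ⟪b, p.1⟫) ≠ ‖p.1‖ ^ 2 * (⟪a, p.2⟫ * ⟪b, p.2⟫)} := by
  refine dense_setOf_ne_of_analyticOnNhd (𝕜 := ℝ) (contDiff_omega_iff_analyticOnNhd.1 ?_)
    (contDiff_omega_iff_analyticOnNhd.1 ?_) fun h => ?_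
  · exact (contDiff_snd.norm_sq ℝ).mul
      ((contDiff_const.inner ℝ contDiff_fst).mul (contDiff_const.inner ℝ contDiff_fst))
  · exact (contDiff_fst.norm_sq ℝ).mul
      ((contDiff_const.inner ℝ contDiff_snd).mul (contDiff_const.inner ℝ contDiff_snd))
  · obtain ⟨x, hx0, hax⟩ := exists_ne_zero_inner_eq_zero hV a
    have ha : a ≠ 0 := by
      rintro rfl
      exact hab (inner_zero_left b)
    have hb : ⟪b, a⟫ ≠ 0 := by rwa [real_inner_comm]
    -- At `(a, x)` the right-hand function vanishes and the left-hand one does not.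
    simpa [hax, hx0, ha, hb] using congrFun h (a, x)

lemma isOpen_setOf_norm_sq_mul_inner_mul_inner_ne (a b : V) :
    IsOpen {p : V × V | ‖p.2‖ ^ 2 * (⟪a, p.1⟫ * ⟪b, p.1⟫) ≠ ‖p.1‖ ^ 2 * (⟪a, p.2⟫ * ⟪b, p.2⟫)} :=
  isOpen_ne_fun (by fun_prop) (by fun_prop)

lemma exists_norm_eq_one_inner_mul_inner_ne {ι : Type*} [Countable ι] (hV : 1 < finrank ℝ V)
    (a : ι → V) : ∃ w z : V, ‖w‖ = 1 ∧ ‖z‖ = 1 ∧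
      ∀ i j, ⟪a i, a j⟫ ≠ 0 → ⟪a i, w⟫ * ⟪a j, w⟫ ≠ ⟪a i, z⟫ * ⟪a j, z⟫ := by
  have := finite_of_finrank_pos (zero_lt_one.trans hV)
  have := nontrivial_of_finrank_pos (zero_lt_one.trans hV)
  have := FiniteDimensional.complete ℝ V
  let S : Set (ι × ι) := {e | ⟪a e.1, a e.2⟫ ≠ 0}
  have hdense := dense_biInter_of_isOpen
    (fun e (_ : e ∈ S) => isOpen_setOf_norm_sq_mul_inner_mul_inner_ne (a e.1) (a e.2))
    S.to_countable fun e he => dense_setOf_norm_sq_mul_inner_mul_inner_ne hV he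
  have hopen : IsOpen ({0}ᶜ ×ˢ {0}ᶜ : Set (V × V)) :=
    isOpen_compl_singleton.prod isOpen_compl_singleton
  obtain ⟨x, hx⟩ := exists_ne (0 : V)
  obtain ⟨⟨w, z⟩, ⟨hw, hz⟩, hwz⟩ := hdense.inter_open_nonempty _ hopen ⟨(x, x), hx, hx⟩
  have hw' : ‖w‖ ≠ 0 := norm_ne_zero_iff.2 hw
  have hz' : ‖z‖ ≠ 0 := norm_ne_zero_iff.2 hz
  refine ⟨‖w‖⁻¹ • w, ‖z‖⁻¹ • z, norm_smul_inv_norm hw, norm_smul_inv_norm hz, fun i j hij h => ?_⟩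
  refine Set.mem_iInter₂.1 hwz (i, j) hij ?_
  simp only [real_inner_smul_right] at h
  field_simp at h
  linarith

end Generic

/-- If S(G) contains a positive semidefinite matrix of rank k > 1 (partial
inertia (k,0)), then S(G) contains a matrix whose partial inertia (r,s)
satisfies r < k and s < k. -/
theorem stmt19 {n : ℕ} (G : SimpleGraph (Fin n)) (k : ℕ) (hk : 1 < k)
    (M : Matrix (Fin n) (Fin n) ℝ) (hM : SMat G M) (hpsd : M.PosSemidef)
    (hrank : M.rank = k) (hin : HasInertia M k 0) :
    ∃ M' : Matrix (Fin n) (Fin n) ℝ, SMat G M' ∧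
      ∃ r s : ℕ, HasInertia M' r s ∧ r < k ∧ s < k := by
  obtain ⟨V, a, rfl, hV⟩ := exists_gram_eq_of_posSemidef hpsd
  rw [hrank] at hV
  obtain ⟨w, z, hw, hz, hne⟩ := exists_norm_eq_one_inner_mul_inner_ne (hV ▸ hk) a
  have hwz : ‖w‖ = ‖z‖ := hw.trans hz.symm
  have hherm := isHermitian_gramTwist a w z
  have hsymm : (gramTwist a w z).IsSymm :=
    (conjTranspose_eq_transpose_of_trivial _).symm.trans hherm
  refine ⟨gramTwist a w z, ⟨hsymm, fun i j hij => ?_⟩,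
    posIn hherm, negIn hherm, ⟨hherm, rfl, rfl⟩,
    hV ▸ posIn_gramTwist_lt a hwz (norm_ne_zero_iff.1 (hz ▸ one_ne_zero)),
    hV ▸ negIn_gramTwist_lt a hwz (norm_ne_zero_iff.1 (hw ▸ one_ne_zero))⟩
  rw [← hM.2 i j hij, gramTwist_apply, gram_apply]
  exact ⟨left_ne_zero_of_mul, fun h => mul_ne_zero h (sub_ne_zero.2 (hne i j h))⟩
end
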